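/- Let f : ℝ² → ℝ² be a C^∞ map with f(0)=0 of the form f = (x, xy² + y⁴ + Σ_{i+j≥5} a_{ij} x^i y^j). Then: (i) a_{05} ≠ 0 if and only if f is A-equivalent to (x,y) ↦ (x, xy² + y⁴ + y⁵) (gulls); (ii) (a_{05} = 0 and a_{07} − 2a_{15} + 4a_{23} ≠ 0) if and only if f is A-equivalent to (x,y) ↦ (x, xy² + y⁴ + y⁷) (ugly gulls); (iii) (a_{05} = 0 and a_{07} − 2a_{15} + 4a_{23} = 0) if and only if j⁷f(0) is A⁷-equivalent to the 7-jet at 0 of (x,y) ↦ (x, xy² + y⁴). Furthermore, if f has the form f = (x, xy² + y⁴ + Σ_{i+j≥8} c_{ij} x^i y^j), then c_{09} − 2c_{17} ≠ 0 if and only if f is A-equivalent to (x,y) ↦ (x, xy² + y⁴ + y⁹). -/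

import Mathlib

open Filter Topology

noncomputable section

/-- Directional derivative of a scalar function. -/
def dop (v : ℝ × ℝ) (g : ℝ × ℝ → ℝ) : ℝ × ℝ → ℝ :=
  fun p => fderiv ℝ g p v

/-- Partial derivative operator in the first coordinate. -/
def pdx : (ℝ × ℝ → ℝ) → ℝ × ℝ → ℝ := dop (1, 0)

/-- Partial derivative operator in the second coordinate. -/
def pdy : (ℝ × ℝ → ℝ) → ℝ × ℝ → ℝ := dop (0, 1)

/-- Taylor coefficient `a_{ij} = ∂_x^i ∂_y^j g(0,0) / (i! j!)` of `g` at the origin. -/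
def tcoeff (g : ℝ × ℝ → ℝ) (i j : ℕ) : ℝ :=
  (pdx^[i] (pdy^[j] g)) 0 / (Nat.factorial i * Nat.factorial j)

/-- The Jacobian determinant `λ_f` of a map `f : ℝ² → ℝ²`. -/
def jacDet (f : ℝ × ℝ → ℝ × ℝ) (p : ℝ × ℝ) : ℝ :=
  (fderiv ℝ f p (1, 0)).1 * (fderiv ℝ f p (0, 1)).2 -
    (fderiv ℝ f p (1, 0)).2 * (fderiv ℝ f p (0, 1)).1

/-- `f` has corank one at `0` : the derivative of `f` at `0` has rank one. -/
def CorankOne (f : ℝ × ℝ → ℝ × ℝ) : Prop :=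
  LinearMap.rank ((fderiv ℝ f 0).toLinearMap) = 1

/-- `η` is a null vector field for `f` near `0`. -/
def IsNullVF (f η : ℝ × ℝ → ℝ × ℝ) : Prop :=
  η 0 ≠ 0 ∧ ∃ U ∈ 𝓝 (0 : ℝ × ℝ),
    ContDiffOn ℝ (⊤ : ℕ∞) η U ∧ ∀ p ∈ U, jacDet f p = 0 → fderiv ℝ f p (η p) = 0

/-- The derivative `(ηg)(p) = Dg(p)(η(p))` of `g` along the vector field `η`. -/
def etaD (η : ℝ × ℝ → ℝ × ℝ) (g : ℝ × ℝ → ℝ) : ℝ × ℝ → ℝ :=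
  fun p => fderiv ℝ g p (η p)

/-- The iterated derivative `η^k g` along the vector field `η`. -/
def etaIter (η : ℝ × ℝ → ℝ × ℝ) : ℕ → (ℝ × ℝ → ℝ) → ℝ × ℝ → ℝ
  | 0, g => g
  | k + 1, g => etaD η (etaIter η k g)

/-- The Hessian matrix of second partial derivatives of `g` at `0`. -/
def hess (g : ℝ × ℝ → ℝ) : Matrix (Fin 2) (Fin 2) ℝ :=
  !![pdx (pdx g) 0, pdx (pdy g) 0; pdy (pdx g) 0, pdy (pdy g) 0]

/-- `A^r`-equivalence of the `r`-jets at `0` of two map-germs `(ℝ²,0) → (ℝ²,0)`. -/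
def JetEquiv (r : ℕ) (f g : ℝ × ℝ → ℝ × ℝ) : Prop :=
  ∃ φ ψ : ℝ × ℝ → ℝ × ℝ,
    ContDiff ℝ (⊤ : ℕ∞) φ ∧ ContDiff ℝ (⊤ : ℕ∞) ψ ∧ φ 0 = 0 ∧ ψ 0 = 0 ∧
    Function.Bijective (⇑(fderiv ℝ φ 0)) ∧ Function.Bijective (⇑(fderiv ℝ ψ 0)) ∧
    ∀ i ≤ r, iteratedFDeriv ℝ i (ψ ∘ f ∘ φ) 0 = iteratedFDeriv ℝ i g 0

/-- `A`-equivalence of two map-germs `(ℝ²,0) → (ℝ²,0)`. -/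
def AEquiv (f g : ℝ × ℝ → ℝ × ℝ) : Prop :=
  ∃ φ ψ : ℝ × ℝ → ℝ × ℝ,
    ContDiff ℝ (⊤ : ℕ∞) φ ∧ ContDiff ℝ (⊤ : ℕ∞) ψ ∧ φ 0 = 0 ∧ ψ 0 = 0 ∧
    Function.Bijective (⇑(fderiv ℝ φ 0)) ∧ Function.Bijective (⇑(fderiv ℝ ψ 0)) ∧
    ∀ᶠ p in 𝓝 (0 : ℝ × ℝ), ψ (f (φ p)) = g p

/-- `f` has the form `(x, g(x,y))` where `g` is `C^∞` and the Taylor coefficients of `g`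
of total degree `< N` at the origin are prescribed by `P`. -/
def HasForm (f : ℝ × ℝ → ℝ × ℝ) (g : ℝ × ℝ → ℝ) (N : ℕ) (P : ℕ → ℕ → ℝ) : Prop :=
  ContDiff ℝ (⊤ : ℕ∞) g ∧ (∀ p, f p = (p.1, g p)) ∧
    ∀ i j, i + j < N → tcoeff g i j = P i j

/-- Coefficients of the polynomial `x y² + y⁴`. -/
def P11 : ℕ → ℕ → ℝ := fun i j => if (i, j) = (1, 2) ∨ (i, j) = (0, 4) then 1 else 0

/-!
Let `g` have leading part `x * y ^ 2 + y ^ 4`. The singular set of `(x, g)` consists of two smooth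
branches, and the fibre-preserving changes of coordinates allow us to assume that they are `y = 0`
and `x = -2 * y ^ 2`, and that `g` vanishes on the first one. On the second one write
`g (-2 * t ^ 2, t) = -t ^ 4 * (ε (t ^ 2) + t * w (t ^ 2))`, using Whitney's theorem that a smooth
even function of `t` is a smooth function of `t ^ 2`; since `x` determines `t ^ 2`, multiplication
by a function of `x` reduces to `ε = 1`. The germ `w` then is the only remaining datum: two normal
forms with the same `w` agree in value and are critical in `y` along both branches, so each is
obtained from the other by a change of the coordinate `y`, and rescaling `t` takes one nonzero
germ `s ^ j * U s` to any other of the same order.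

Conversely, the order of `w` is an invariant. The restriction of a function of `(x, g)` to the
branch `x = -2 * y ^ 2` has an odd part starting in the same degree as that of `g`, because the
difference of the two values at `±t` is to leading order linear in the difference of the values of
`g`. The order can be read off from the Taylor coefficients of `g` before the branch has been
straightened as soon as `∂g/∂y` vanishes on `x = -2 * y ^ 2` to an order high enough that the error
in the position of the branch does not matter; this yields the coefficients `a₀₅`,
`a₀₇ - 2 * a₁₅ + 4 * a₂₃` and `c₀₉ - 2 * c₁₇`.
-/

open scoped ContDiff

section Calculus

variable {E F : Type*} [NormedAddCommGroup E] [NormedSpace ℝ E] [FiniteDimensional ℝ E]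
  [NormedAddCommGroup F] [NormedSpace ℝ F]

theorem hasFDerivAt_intervalIntegral_of_contDiff [CompleteSpace F] {k : E × ℝ → F}
    (hk : ContDiff ℝ 1 k) (a b : ℝ) (p : E) :
    HasFDerivAt (fun p ↦ ∫ s in a..b, k (p, s))
      (∫ s in a..b, (fderiv ℝ k (p, s)).comp (.inl ℝ E ℝ)) p := by
  have hk' : Continuous fun q : E × ℝ ↦ (fderiv ℝ k q).comp (.inl ℝ E ℝ) :=
    (hk.continuous_fderiv one_ne_zero).clm_comp continuous_const
  have hpartial (x : E) (s : ℝ) :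
      HasFDerivAt (fun x ↦ k (x, s)) ((fderiv ℝ k (x, s)).comp (.inl ℝ E ℝ)) x :=
    (hk.differentiable one_ne_zero (x, s)).hasFDerivAt.comp x (hasFDerivAt_prodMk_left x s)
  obtain ⟨C, hC⟩ := ((isCompact_closedBall p 1).prod (isCompact_uIcc (a := a) (b := b))
    ).exists_bound_of_continuousOn hk'.continuousOn
  have hslice (x : E) : Continuous fun s : ℝ ↦ k (x, s) := by
    have := hk.continuous
    fun_prop
  have hslice' : Continuous fun s : ℝ ↦ (fderiv ℝ k (p, s)).comp (.inl ℝ E ℝ) :=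
    hk'.comp (Continuous.prodMk_right p)
  exact intervalIntegral.hasFDerivAt_integral_of_dominated_of_fderiv_le
    (s := Metric.closedBall p 1) (bound := fun _ ↦ C)
    (F' := fun p s ↦ (fderiv ℝ k (p, s)).comp (.inl ℝ E ℝ))
    (Metric.closedBall_mem_nhds p one_pos)
    (.of_forall fun x ↦ (hslice x).aestronglyMeasurable) ((hslice p).intervalIntegrable _ _)
    hslice'.aestronglyMeasurable
    (.of_forall fun t ht x hx ↦ hC _ ⟨hx, Set.uIoc_subset_uIcc ht⟩) intervalIntegrable_const
    (.of_forall fun t _ x _ ↦ hpartial x t)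

theorem contDiff_intervalIntegral_of_contDiff [CompleteSpace F] {k : E × ℝ → F}
    (hk : ContDiff ℝ ∞ k) (a b : ℝ) : ContDiff ℝ ∞ fun p ↦ ∫ s in a..b, k (p, s) := by
  refine contDiff_infty.2 fun n ↦ ?_
  induction n generalizing k with
  | zero =>
    exact contDiff_zero.2 (intervalIntegral.continuous_parametric_intervalIntegral_of_continuous'
      (f := fun p s ↦ k (p, s)) hk.continuous a b)
  | succ n ih =>
    have hderiv := hasFDerivAt_intervalIntegral_of_contDiff (hk.of_le (by simp)) a b
    push_cast
    refine contDiff_succ_iff_fderiv_apply.2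
      ⟨fun p ↦ (hderiv p).differentiableAt, by simp, fun v ↦ ?_⟩
    have hk' : ContDiff ℝ ∞ fun q : E × ℝ ↦ fderiv ℝ k q (v, 0) :=
      (hk.fderiv_right (by simp)).clm_apply contDiff_const
    convert ih hk' using 2 with p
    rw [(hderiv p).fderiv, ContinuousLinearMap.intervalIntegral_apply]
    · rfl
    · refine Continuous.intervalIntegrable ?_ _ _
      have := hk.continuous_fderiv (by simp)
      fun_prop

theorem exists_contDiff_eventuallyEq {θ : E → F} {a : E} (hθ : ∀ᶠ p in 𝓝 a, ContDiffAt ℝ ∞ θ p) :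
    ∃ Θ : E → F, ContDiff ℝ ∞ Θ ∧ Θ =ᶠ[𝓝 a] θ := by
  obtain ⟨r, hr, hball⟩ := Metric.eventually_nhds_iff_ball.1 hθ
  let χ : ContDiffBump a := ⟨r / 4, r / 2, by positivity, by linarith⟩
  refine ⟨fun p ↦ χ p • θ p, contDiff_iff_contDiffAt.2 fun p ↦ ?_, ?_⟩
  · by_cases hp : p ∈ Metric.ball a r
    · exact χ.contDiffAt.smul (hball p hp)
    · have hsupp : p ∉ tsupport χ := by
        rw [χ.tsupport_eq]
        exact fun h ↦ hp (Metric.closedBall_subset_ball (half_lt_self hr) h)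
      refine (contDiffAt_const (c := 0)).congr_of_eventuallyEq ?_
      filter_upwards [notMem_tsupport_iff_eventuallyEq.1 hsupp] with q hq
      simp [hq]
  · filter_upwards [χ.eventuallyEq_one] with p hp
    simp [hp]

theorem eventually_contDiffAt_symm {φ : E → E} (hφ : ContDiff ℝ ∞ φ) (H : OpenPartialHomeomorph E E)
    (hH : ⇑H = φ) {a : E} (ha : a ∈ H.source) (hbij : Function.Bijective (fderiv ℝ φ a)) :
    ∀ᶠ y in 𝓝 (φ a), ContDiffAt ℝ ∞ H.symm y := by
  have : CompleteSpace E := FiniteDimensional.complete ℝ E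
  let e := ContinuousLinearEquiv.ofBijective (fderiv ℝ φ a)
    (LinearMap.ker_eq_bot.2 hbij.1) (LinearMap.range_eq_top.2 hbij.2)
  have hinv : ∀ᶠ x in 𝓝 a, fderiv ℝ φ x ∈ Set.range ((↑) : (E ≃L[ℝ] E) → E →L[ℝ] E) :=
    (hφ.continuous_fderiv (by simp)).continuousAt.eventually (ContinuousLinearEquiv.nhds e)
  have htarget : φ a ∈ H.target := hH ▸ H.map_source ha
  have hsymm : Tendsto H.symm (𝓝 (φ a)) (𝓝 a) := by
    have hcont := (H.continuousAt_symm (H.map_source ha)).tendsto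
    rwa [H.left_inv ha, hH] at hcont
  filter_upwards [hsymm.eventually hinv, H.open_target.mem_nhds htarget] with y ⟨e', he'⟩ hy
  refine H.contDiffAt_symm (f₀' := e') hy ?_ (hH ▸ hφ.contDiffAt)
  rw [he', hH]
  exact (hφ.differentiable (by simp) _).hasFDerivAt

theorem exists_contDiff_local_inverse {φ : E → E} (hφ : ContDiff ℝ ∞ φ) {a : E}
    (hbij : Function.Bijective (fderiv ℝ φ a)) :
    ∃ φ' : E → E, ContDiff ℝ ∞ φ' ∧ (∀ᶠ p in 𝓝 (φ a), φ (φ' p) = p) ∧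
      (∀ᶠ p in 𝓝 a, φ' (φ p) = p) := by
  have : CompleteSpace E := FiniteDimensional.complete ℝ E
  let e := ContinuousLinearEquiv.ofBijective (fderiv ℝ φ a)
    (LinearMap.ker_eq_bot.2 hbij.1) (LinearMap.range_eq_top.2 hbij.2)
  have hderiv : HasFDerivAt φ (e : E →L[ℝ] E) a := (hφ.differentiable (by simp) a).hasFDerivAt
  let H := hφ.contDiffAt.toOpenPartialHomeomorph φ hderiv (by simp)
  have ha : a ∈ H.source := hφ.contDiffAt.mem_toOpenPartialHomeomorph_source hderiv (by simp)
  obtain ⟨φ', hφ', heq⟩ := exists_contDiff_eventuallyEq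
    (eventually_contDiffAt_symm hφ H rfl ha hbij)
  refine ⟨φ', hφ', ?_, ?_⟩
  · filter_upwards [heq, H.open_target.mem_nhds (H.map_source ha)] with p hp hmem
    rw [hp]
    exact H.right_inv hmem
  · filter_upwards [hφ.continuous.continuousAt.eventually heq, H.open_source.mem_nhds ha]
      with p hp hmem
    rw [hp]
    exact H.left_inv hmem

theorem bijective_fderiv_of_eventually_leftInverse {φ φ' : E → E} {a : E}
    (hφ : DifferentiableAt ℝ φ a) (hφ' : DifferentiableAt ℝ φ' (φ a))
    (hinv : ∀ᶠ p in 𝓝 a, φ' (φ p) = p) :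
    Function.Bijective (fderiv ℝ φ a) ∧ Function.Bijective (fderiv ℝ φ' (φ a)) := by
  have hcomp : (fderiv ℝ φ' (φ a)).comp (fderiv ℝ φ a) = .id ℝ E :=
    (hφ'.hasFDerivAt.comp a hφ.hasFDerivAt).unique ((hasFDerivAt_id a).congr_of_eventuallyEq hinv)
  have hleft : Function.LeftInverse (fderiv ℝ φ' (φ a)) (fderiv ℝ φ a) := DFunLike.congr_fun hcomp
  have hinj := hleft.injective
  have hbij : Function.Bijective (fderiv ℝ φ a) :=
    ⟨hinj, (LinearMap.injective_iff_surjective (f := (fderiv ℝ φ a).toLinearMap)).1 hinj⟩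
  exact ⟨hbij, (hleft.rightInverse_of_surjective hbij.2).injective, hleft.surjective⟩

theorem exists_contDiff_implicit {Φ : E × ℝ → ℝ} (hΦ : ContDiff ℝ ∞ Φ) {a : E} {θ₀ d : ℝ}
    (h₀ : Φ (a, θ₀) = 0) (hderiv : HasDerivAt (fun s ↦ Φ (a, s)) d θ₀) (hd : d ≠ 0) :
    ∃ θ : E → ℝ, ContDiff ℝ ∞ θ ∧ θ a = θ₀ ∧ ∀ᶠ p in 𝓝 a, Φ (p, θ p) = 0 := by
  let G : E × ℝ → E × ℝ := fun q ↦ (q.1, Φ q)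
  have hG : ContDiff ℝ ∞ G := contDiff_fst.prodMk hΦ
  have hΦ' : HasFDerivAt Φ (fderiv ℝ Φ (a, θ₀)) (a, θ₀) :=
    (hΦ.differentiable (by simp) _).hasFDerivAt
  have hd' : fderiv ℝ Φ (a, θ₀) (0, 1) = d :=
    (hΦ'.comp_hasDerivAt θ₀ ((hasDerivAt_const θ₀ a).prodMk (hasDerivAt_id θ₀))).unique hderiv
  have hG' : fderiv ℝ G (a, θ₀) = (ContinuousLinearMap.fst ℝ E ℝ).prod (fderiv ℝ Φ (a, θ₀)) :=
    (hasFDerivAt_fst.prodMk hΦ').fderiv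
  have hinj : Function.Injective (fderiv ℝ G (a, θ₀)) := by
    refine (injective_iff_map_eq_zero _).2 fun v hv ↦ ?_
    obtain ⟨hfst, hsnd⟩ : v.1 = 0 ∧ fderiv ℝ Φ (a, θ₀) v = 0 := by simpa [hG'] using hv
    have hv_eq : v = v.2 • ((0 : E), (1 : ℝ)) := by ext <;> simp [hfst]
    rw [hv_eq, map_smul, hd', smul_eq_mul, mul_eq_zero_iff_right hd] at hsnd
    exact Prod.ext hfst hsnd
  obtain ⟨G', hG', hright, hleft⟩ := exists_contDiff_local_inverse hG (a := (a, θ₀))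
    ⟨hinj, (LinearMap.injective_iff_surjective (f := (fderiv ℝ G (a, θ₀)).toLinearMap)).1 hinj⟩
  have hGa : G (a, θ₀) = (a, 0) := by simp [G, h₀]
  refine ⟨fun p ↦ (G' (p, 0)).2, by fun_prop, ?_, ?_⟩
  · simp [← hGa, hleft.self_of_nhds]
  · have hslice : Tendsto (fun p : E ↦ (p, (0 : ℝ))) (𝓝 a) (𝓝 (G (a, θ₀))) :=
      hGa ▸ (Continuous.prodMk_left (0 : ℝ)).tendsto a
    filter_upwards [hslice.eventually hright] with p hp
    obtain ⟨hfst, hsnd⟩ : (G' (p, 0)).1 = p ∧ Φ (G' (p, 0)) = 0 := Prod.ext_iff.1 hp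
    have hG'p : (p, (G' (p, 0)).2) = G' (p, 0) := Prod.ext hfst.symm rfl
    rw [hG'p, hsnd]

theorem exists_hadamard [CompleteSpace F] {h : E × ℝ → F} (hh : ContDiff ℝ ∞ h) :
    ∃ H : E × ℝ → F, ContDiff ℝ ∞ H ∧ (∀ e y, h (e, y) = h (e, 0) + y • H (e, y)) ∧
      ∀ e, H (e, 0) = fderiv ℝ h (e, 0) (0, 1) := by
  have hfderiv : ContDiff ℝ ∞ (fderiv ℝ h) := hh.fderiv_right (by simp)
  have hk : ContDiff ℝ ∞ fun q : (E × ℝ) × ℝ ↦ fderiv ℝ h (q.1.1, q.2 * q.1.2) (0, 1) :=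
    (hfderiv.comp (by fun_prop : ContDiff ℝ ∞ fun q : (E × ℝ) × ℝ ↦ (q.1.1, q.2 * q.1.2))
      ).clm_apply contDiff_const
  refine ⟨fun p ↦ ∫ s in (0 : ℝ)..1, fderiv ℝ h (p.1, s * p.2) (0, 1),
    contDiff_intervalIntegral_of_contDiff hk 0 1, fun e y ↦ ?_, fun e ↦ by simp⟩
  have hpath (s : ℝ) :
      HasDerivAt (fun s : ℝ ↦ h (e, s * y)) (y • fderiv ℝ h (e, s * y) (0, 1)) s := by
    have hline : HasDerivAt (fun s : ℝ ↦ (e, s * y)) (y • ((0 : E), (1 : ℝ))) s := by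
      simpa using (hasDerivAt_const s e).prodMk ((hasDerivAt_id s).mul_const y)
    simpa only [map_smul, Function.comp_def] using
      (hh.differentiable (by simp) (e, s * y)).hasFDerivAt.comp_hasDerivAt s hline
  have hcont : Continuous fun s : ℝ ↦ y • fderiv ℝ h (e, s * y) (0, 1) :=
    continuous_const.smul
      (hk.continuous.comp (by fun_prop : Continuous fun s : ℝ ↦ (((e, y) : E × ℝ), s)))
  have hftc := intervalIntegral.integral_eq_sub_of_hasDerivAt (a := 0) (b := 1)
    (fun s _ ↦ hpath s) (hcont.intervalIntegrable _ _)
  rw [intervalIntegral.integral_smul, one_mul, zero_mul] at hftc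
  rw [hftc]
  abel

end Calculus

section Plane

theorem contDiff_pdx {g : ℝ × ℝ → ℝ} (hg : ContDiff ℝ ∞ g) : ContDiff ℝ ∞ (pdx g) :=
  (hg.fderiv_right (by simp)).clm_apply contDiff_const

theorem contDiff_pdy {g : ℝ × ℝ → ℝ} (hg : ContDiff ℝ ∞ g) : ContDiff ℝ ∞ (pdy g) :=
  (hg.fderiv_right (by simp)).clm_apply contDiff_const

theorem fderiv_apply_eq_pdx_pdy (g : ℝ × ℝ → ℝ) (p v : ℝ × ℝ) :
    fderiv ℝ g p v = v.1 * pdx g p + v.2 * pdy g p := by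
  have hv : v = v.1 • ((1 : ℝ), (0 : ℝ)) + v.2 • ((0 : ℝ), (1 : ℝ)) := by ext <;> simp
  conv_lhs => rw [hv, map_add, map_smul, map_smul]
  rfl

theorem hasDerivAt_comp_prodMk {g : ℝ × ℝ → ℝ} {a b : ℝ → ℝ} {a' b' t : ℝ}
    (hg : DifferentiableAt ℝ g (a t, b t)) (ha : HasDerivAt a a' t) (hb : HasDerivAt b b' t) :
    HasDerivAt (fun s ↦ g (a s, b s)) (a' * pdx g (a t, b t) + b' * pdy g (a t, b t)) t := by
  rw [← fderiv_apply_eq_pdx_pdy g (a t, b t) (a', b')]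
  exact hg.hasFDerivAt.comp_hasDerivAt t (ha.prodMk hb)

theorem hasDerivAt_pdx {g : ℝ × ℝ → ℝ} {p : ℝ × ℝ} (hg : DifferentiableAt ℝ g p) :
    HasDerivAt (fun s ↦ g (s, p.2)) (pdx g p) p.1 := by
  simpa using hasDerivAt_comp_prodMk hg (hasDerivAt_id p.1) (hasDerivAt_const p.1 p.2)

theorem hasDerivAt_pdy {g : ℝ × ℝ → ℝ} {p : ℝ × ℝ} (hg : DifferentiableAt ℝ g p) :
    HasDerivAt (fun s ↦ g (p.1, s)) (pdy g p) p.2 := by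
  simpa using hasDerivAt_comp_prodMk hg (hasDerivAt_const p.2 p.1) (hasDerivAt_id p.2)

theorem pdy_congr {g h : ℝ × ℝ → ℝ} {p : ℝ × ℝ} (hgh : g =ᶠ[𝓝 p] h) :
    pdy g =ᶠ[𝓝 p] pdy h :=
  hgh.fderiv.fun_comp (· (0, 1))

theorem jacDet_prodMk {A B : ℝ × ℝ → ℝ} {p : ℝ × ℝ} (hA : DifferentiableAt ℝ A p)
    (hB : DifferentiableAt ℝ B p) :
    jacDet (fun q ↦ (A q, B q)) p = pdx A p * pdy B p - pdx B p * pdy A p := by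
  rw [jacDet, hA.fderiv_prodMk hB]
  rfl

theorem bijective_fderiv_iff_jacDet_ne_zero {f : ℝ × ℝ → ℝ × ℝ} {p : ℝ × ℝ} :
    Function.Bijective (fderiv ℝ f p) ↔ jacDet f p ≠ 0 := by
  have hsplit (v : ℝ × ℝ) : fderiv ℝ f p v =
      v.1 • fderiv ℝ f p (1, 0) + v.2 • fderiv ℝ f p (0, 1) := by
    rw [← map_smul, ← map_smul, ← map_add]
    simp
  have hfst (v : ℝ × ℝ) := congrArg Prod.fst (hsplit v)
  have hsnd (v : ℝ × ℝ) := congrArg Prod.snd (hsplit v)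
  simp only [Prod.fst_add, Prod.snd_add, Prod.smul_fst, Prod.smul_snd, smul_eq_mul] at hfst hsnd
  rw [jacDet]
  constructor
  · intro hbij hdet
    obtain ⟨u, hu⟩ := hbij.2 (1, 0)
    obtain ⟨v, hv⟩ := hbij.2 (0, 1)
    have hu₁ := hfst u
    have hu₂ := hsnd u
    have hv₁ := hfst v
    have hv₂ := hsnd v
    rw [hu] at hu₁ hu₂
    rw [hv] at hv₁ hv₂
    -- The product of the determinants of `(u, v)` and of the derivative is `det 1 = 1`.
    have : (1 : ℝ) = (u.1 * v.2 - u.2 * v.1) * 0 := by rw [← hdet]; grind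
    simp at this
  · intro hdet
    have hinj : Function.Injective (fderiv ℝ f p) := by
      refine (injective_iff_map_eq_zero _).2 fun v hv ↦ ?_
      have h₁ := hfst v
      have h₂ := hsnd v
      rw [hv] at h₁ h₂
      simp only [Prod.fst_zero, Prod.snd_zero] at h₁ h₂
      have hv₁ : v.1 * ((fderiv ℝ f p (1, 0)).1 * (fderiv ℝ f p (0, 1)).2 -
          (fderiv ℝ f p (1, 0)).2 * (fderiv ℝ f p (0, 1)).1) = 0 := by
        linear_combination (fderiv ℝ f p (0, 1)).1 * h₂ - (fderiv ℝ f p (0, 1)).2 * h₁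
      have hv₂ : v.2 * ((fderiv ℝ f p (1, 0)).1 * (fderiv ℝ f p (0, 1)).2 -
          (fderiv ℝ f p (1, 0)).2 * (fderiv ℝ f p (0, 1)).1) = 0 := by
        linear_combination (fderiv ℝ f p (1, 0)).2 * h₁ - (fderiv ℝ f p (1, 0)).1 * h₂
      exact Prod.ext ((mul_eq_zero_iff_right hdet).1 hv₁) ((mul_eq_zero_iff_right hdet).1 hv₂)
    exact ⟨hinj, (LinearMap.injective_iff_surjective (f := (fderiv ℝ f p).toLinearMap)).1 hinj⟩

end Plane

section Equivalence

theorem tendsto_zero_of_contDiff {E F : Type*} [NormedAddCommGroup E] [NormedSpace ℝ E]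
    [NormedAddCommGroup F] [NormedSpace ℝ F] {φ : E → F} (hφ : ContDiff ℝ ∞ φ) (h₀ : φ 0 = 0) :
    Tendsto φ (𝓝 0) (𝓝 0) := by
  simpa only [h₀] using hφ.continuous.tendsto 0

theorem AEquiv.of_intertwine {f g φ ψ : ℝ × ℝ → ℝ × ℝ} (hφ : ContDiff ℝ ∞ φ)
    (hψ : ContDiff ℝ ∞ ψ) (hφ₀ : φ 0 = 0) (hψ₀ : ψ 0 = 0) (hdφ : jacDet φ 0 ≠ 0)
    (hdψ : jacDet ψ 0 ≠ 0) (h : ∀ᶠ p in 𝓝 0, ψ (f p) = g (φ p)) : AEquiv f g := by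
  obtain ⟨φ', hφ', hright, hleft⟩ :=
    exists_contDiff_local_inverse hφ (bijective_fderiv_iff_jacDet_ne_zero.2 hdφ)
  have hbij := (bijective_fderiv_of_eventually_leftInverse (hφ.differentiable (by simp) _)
    (hφ'.differentiable (by simp) _) hleft).2
  have hφ'₀ := hleft.self_of_nhds
  rw [hφ₀] at hright hbij hφ'₀
  refine ⟨φ', ψ, hφ', hψ, hφ'₀, hψ₀, hbij, bijective_fderiv_iff_jacDet_ne_zero.2 hdψ, ?_⟩
  filter_upwards [(tendsto_zero_of_contDiff hφ' hφ'₀).eventually h, hright] with p hp hp'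
  rw [hp, hp']

theorem AEquiv.trans {f g h : ℝ × ℝ → ℝ × ℝ} (hfg : AEquiv f g) (hgh : AEquiv g h) :
    AEquiv f h := by
  obtain ⟨φ, ψ, hφ, hψ, hφ₀, hψ₀, hdφ, hdψ, hfg⟩ := hfg
  obtain ⟨φ', ψ', hφ', hψ', hφ'₀, hψ'₀, hdφ', hdψ', hgh⟩ := hgh
  have hfderiv {φ ψ : ℝ × ℝ → ℝ × ℝ} (hφ : ContDiff ℝ ∞ φ) (hψ : ContDiff ℝ ∞ ψ) (hφ₀ : φ 0 = 0) :
      fderiv ℝ (ψ ∘ φ) 0 = (fderiv ℝ ψ 0).comp (fderiv ℝ φ 0) := by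
    rw [fderiv_comp 0 (hψ.differentiable (by simp) _) (hφ.differentiable (by simp) _), hφ₀]
  refine ⟨φ ∘ φ', ψ' ∘ ψ, hφ.comp hφ', hψ'.comp hψ, by simp [hφ₀, hφ'₀], by simp [hψ₀, hψ'₀], ?_,
    ?_, ?_⟩
  · rw [hfderiv hφ' hφ hφ'₀]
    exact hdφ.comp hdφ'
  · rw [hfderiv hψ hψ' hψ₀]
    exact hdψ'.comp hdψ
  · filter_upwards [(tendsto_zero_of_contDiff hφ' hφ'₀).eventually hfg, hgh] with p hp hp'
    rw [← hp', ← hp]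
    rfl

theorem AEquiv.symm {f g : ℝ × ℝ → ℝ × ℝ} (hfg : AEquiv f g) (hf : ContDiff ℝ ∞ f)
    (hf₀ : f 0 = 0) : AEquiv g f := by
  obtain ⟨φ, ψ, hφ, hψ, hφ₀, hψ₀, hdφ, hdψ, h⟩ := hfg
  obtain ⟨ψ', hψ', hright, hleft⟩ := exists_contDiff_local_inverse hψ hdψ
  have hbij := (bijective_fderiv_of_eventually_leftInverse (hψ.differentiable (by simp) _)
    (hψ'.differentiable (by simp) _) hleft).2
  have hψ'₀ := hleft.self_of_nhds
  rw [hψ₀] at hright hbij hψ'₀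
  refine of_intertwine hφ hψ' hφ₀ hψ'₀ (bijective_fderiv_iff_jacDet_ne_zero.1 hdφ)
    (bijective_fderiv_iff_jacDet_ne_zero.1 hbij) ?_
  have hfφ : Tendsto (f ∘ φ) (𝓝 0) (𝓝 0) :=
    tendsto_zero_of_contDiff (hf.comp hφ) (by simp [hφ₀, hf₀])
  filter_upwards [h, hfφ.eventually hleft] with p hp hp'
  rw [← hp]
  exact hp'

/-- The map germ `(x, y) ↦ (x, g (x, y))`: every corank one germ of the plane has this shape in
suitable coordinates. -/
def prenormal (g : ℝ × ℝ → ℝ) : ℝ × ℝ → ℝ × ℝ := fun p ↦ (p.1, g p)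

theorem contDiff_prenormal {g : ℝ × ℝ → ℝ} (hg : ContDiff ℝ ∞ g) : ContDiff ℝ ∞ (prenormal g) :=
  contDiff_fst.prodMk hg

theorem jacDet_prenormal {g : ℝ × ℝ → ℝ} {p : ℝ × ℝ} (hg : DifferentiableAt ℝ g p) :
    jacDet (prenormal g) p = pdy g p := by
  have hfst : pdx Prod.fst p = 1 ∧ pdy Prod.fst p = 0 := by simp [pdx, pdy, dop, fderiv_fst]
  refine (jacDet_prodMk differentiableAt_fst hg).trans ?_
  rw [hfst.1, hfst.2]
  ring

theorem AEquiv.prenormal_of_fiberwise {g h ν ψ : ℝ × ℝ → ℝ} (hν : ContDiff ℝ ∞ ν)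
    (hψ : ContDiff ℝ ∞ ψ) (hν₀ : ν 0 = 0) (hψ₀ : ψ 0 = 0) (hdν : pdy ν 0 ≠ 0) (hdψ : pdy ψ 0 ≠ 0)
    (hgh : ∀ᶠ p in 𝓝 0, ψ (p.1, g (p.1, ν p)) = h p) : AEquiv (prenormal g) (prenormal h) := by
  refine ⟨prenormal ν, prenormal ψ, contDiff_prenormal hν, contDiff_prenormal hψ,
    by simp [prenormal, hν₀], by simp [prenormal, hψ₀], ?_, ?_,
    hgh.mono fun p hp ↦ Prod.ext rfl hp⟩ <;>
  rwa [bijective_fderiv_iff_jacDet_ne_zero, jacDet_prenormal (ContDiff.differentiable ‹_›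
    (by simp) _)]

end Equivalence

open Asymptotics

section TaylorCoefficients

theorem pdy_pdx_comm {g : ℝ × ℝ → ℝ} (hg : ContDiff ℝ ∞ g) : pdy (pdx g) = pdx (pdy g) := by
  funext p
  have happly (v w : ℝ × ℝ) :
      fderiv ℝ (fun q ↦ fderiv ℝ g q v) p w = fderiv ℝ (fderiv ℝ g) p w v := by
    have hdiff : ContDiff ℝ ∞ (fderiv ℝ g) := hg.fderiv_right (by simp)
    rw [((hdiff.differentiable (by simp) p).hasFDerivAt.clm_apply (hasFDerivAt_const v p)).fderiv]
    simp
  refine (happly (1, 0) (0, 1)).trans (.trans ?_ (happly (0, 1) (1, 0)).symm)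
  exact hg.contDiffAt.isSymmSndFDerivAt
    (by simpa using WithTop.coe_le_coe.2 (le_top : (2 : ℕ∞) ≤ ⊤)) _ _

theorem contDiff_iterate_pdy {g : ℝ × ℝ → ℝ} (hg : ContDiff ℝ ∞ g) (j : ℕ) :
    ContDiff ℝ ∞ (pdy^[j] g) :=
  Function.Iterate.rec (ContDiff ℝ ∞ ·) hg (fun _ ↦ contDiff_pdy) j

theorem iterate_pdy_pdx_comm {g : ℝ × ℝ → ℝ} (hg : ContDiff ℝ ∞ g) (j : ℕ) :
    pdy^[j] (pdx g) = pdx (pdy^[j] g) := by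
  induction j with
  | zero => rfl
  | succ j ih =>
    rw [Function.iterate_succ_apply', ih, pdy_pdx_comm (contDiff_iterate_pdy hg j),
      Function.iterate_succ_apply']

theorem tcoeff_zero_zero (g : ℝ × ℝ → ℝ) : tcoeff g 0 0 = g 0 := by simp [tcoeff]

theorem tcoeff_pdx {g : ℝ × ℝ → ℝ} (hg : ContDiff ℝ ∞ g) (i j : ℕ) :
    tcoeff (pdx g) i j = (i + 1) * tcoeff g (i + 1) j := by
  rw [tcoeff, tcoeff, iterate_pdy_pdx_comm hg, ← Function.iterate_succ_apply, Nat.factorial_succ]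
  push_cast
  field_simp

theorem tcoeff_pdy (g : ℝ × ℝ → ℝ) (i j : ℕ) :
    tcoeff (pdy g) i j = (j + 1) * tcoeff g i (j + 1) := by
  rw [tcoeff, tcoeff, ← Function.iterate_succ_apply, Nat.factorial_succ]
  push_cast
  field_simp

theorem pdx_add {g h : ℝ × ℝ → ℝ} (hg : ContDiff ℝ ∞ g) (hh : ContDiff ℝ ∞ h) :
    pdx (g + h) = pdx g + pdx h := by
  funext p
  simp [pdx, dop, fderiv_add (hg.differentiable (by simp) p) (hh.differentiable (by simp) p)]

theorem pdy_add {g h : ℝ × ℝ → ℝ} (hg : ContDiff ℝ ∞ g) (hh : ContDiff ℝ ∞ h) :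
    pdy (g + h) = pdy g + pdy h := by
  funext p
  simp [pdy, dop, fderiv_add (hg.differentiable (by simp) p) (hh.differentiable (by simp) p)]

theorem tcoeff_add {g h : ℝ × ℝ → ℝ} (hg : ContDiff ℝ ∞ g) (hh : ContDiff ℝ ∞ h) (i j : ℕ) :
    tcoeff (g + h) i j = tcoeff g i j + tcoeff h i j := by
  induction j generalizing g h with
  | zero =>
    induction i generalizing g h with
    | zero => simp [tcoeff_zero_zero]
    | succ i ih =>
      have h₀ : (i + 1 : ℝ) ≠ 0 := by positivity
      rw [← mul_right_inj' h₀, mul_add, ← tcoeff_pdx (g := g + h) (hg.add hh), ← tcoeff_pdx hg,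
        ← tcoeff_pdx hh, pdx_add hg hh, ih (contDiff_pdx hg) (contDiff_pdx hh)]
  | succ j ih =>
    have h₀ : (j + 1 : ℝ) ≠ 0 := by positivity
    rw [← mul_right_inj' h₀, mul_add, ← tcoeff_pdy, ← tcoeff_pdy, ← tcoeff_pdy,
      pdy_add hg hh, ih (contDiff_pdy hg) (contDiff_pdy hh)]

theorem tcoeff_monomial (c : ℝ) (a b i j : ℕ) :
    tcoeff (fun p ↦ c * (p.1 ^ a * p.2 ^ b)) i j = if i = a ∧ j = b then c else 0 := by
  have hmonomial (c : ℝ) (a b : ℕ) : ContDiff ℝ ∞ fun p : ℝ × ℝ ↦ c * (p.1 ^ a * p.2 ^ b) := by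
    fun_prop
  have hdiff (c : ℝ) (a b : ℕ) (p) := (hmonomial c a b).differentiable (by simp) p
  induction j generalizing b c with
  | zero =>
    induction i generalizing a c with
    | zero => cases a <;> cases b <;> simp [tcoeff_zero_zero]
    | succ i ih =>
      have hpdx : pdx (fun p ↦ c * (p.1 ^ a * p.2 ^ b)) =
          fun p ↦ c * a * (p.1 ^ (a - 1) * p.2 ^ b) := by
        funext p
        refine (hasDerivAt_pdx (hdiff c a b p)).unique ?_
        refine (((hasDerivAt_pow a p.1).mul_const (p.2 ^ b)).const_mul c).congr_deriv ?_
        ring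
      have h₀ : (i + 1 : ℝ) ≠ 0 := by positivity
      rw [← mul_right_inj' h₀, ← tcoeff_pdx (hmonomial c a b), hpdx, ih]
      rcases a with _ | a
      · simp
      · by_cases hi : i = a ∧ 0 = b <;> simp [hi, mul_comm]
  | succ j ih =>
    have hpdy : pdy (fun p ↦ c * (p.1 ^ a * p.2 ^ b)) =
        fun p ↦ c * b * (p.1 ^ a * p.2 ^ (b - 1)) := by
      funext p
      refine (hasDerivAt_pdy (hdiff c a b p)).unique ?_
      refine (((hasDerivAt_pow b p.2).const_mul (p.1 ^ a)).const_mul c).congr_deriv ?_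
      ring
    have h₀ : (j + 1 : ℝ) ≠ 0 := by positivity
    rw [← mul_right_inj' h₀, ← tcoeff_pdy, hpdy, ih]
    rcases b with _ | b
    · simp
    · by_cases hj : i = a ∧ j = b <;> simp [hj, mul_comm]

end TaylorCoefficients

section BranchExpansion

/-- For `c = tcoeff g` this is the Taylor coefficient of order `k` of `t ↦ g (-2 * t ^ 2, t)`, the
restriction of `g` to the branch `x = -2 * y ^ 2` of the singular set of `x * y ^ 2 + y ^ 4`. -/
def branchCoeff (c : ℕ → ℕ → ℝ) (k : ℕ) : ℝ :=
  ∑ i ∈ Finset.range (k / 2 + 1), (-2) ^ i * c i (k - 2 * i)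

theorem branchCoeff_tcoeff_succ_succ {g : ℝ × ℝ → ℝ} (hg : ContDiff ℝ ∞ g) (k : ℕ) :
    (k + 2) * branchCoeff (tcoeff g) (k + 2) =
      branchCoeff (tcoeff (pdy g)) (k + 1) - 4 * branchCoeff (tcoeff (pdx g)) k := by
  set c := tcoeff g
  have hx : branchCoeff (tcoeff (pdx g)) k = ∑ i ∈ Finset.range (k / 2 + 1),
      (-2) ^ i * ((i + 1) * c (i + 1) (k - 2 * i)) := by
    simp only [branchCoeff, tcoeff_pdx hg, c]
  -- The terms are weighted by the exponent of `y`, which vanishes in the extra last term.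
  have hy : branchCoeff (tcoeff (pdy g)) (k + 1) = ∑ i ∈ Finset.range (k / 2 + 2),
      (-2) ^ i * ((k + 2 - 2 * i) * c i (k + 2 - 2 * i)) := by
    simp only [branchCoeff, tcoeff_pdy]
    refine (Finset.sum_congr rfl fun i hi ↦ ?_).trans (Finset.sum_subset
      (Finset.range_subset_range.2 (by omega : (k + 1) / 2 + 1 ≤ k / 2 + 2)) fun i hi hi' ↦ ?_)
    · have hle : 2 * i ≤ k + 1 := by have := Finset.mem_range.1 hi; omega
      rw [Nat.cast_sub hle, show k + 2 - 2 * i = k + 1 - 2 * i + 1 by omega]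
      push_cast
      ring
    · have heq : k + 2 = 2 * i := by
        have := Finset.mem_range.1 hi
        have := mt Finset.mem_range.2 hi'
        omega
      have : (k + 2 - 2 * i : ℝ) = 0 := sub_eq_zero.2 (by exact_mod_cast heq)
      simp [this]
  have h : branchCoeff c (k + 2) =
      ∑ i ∈ Finset.range (k / 2 + 2), (-2) ^ i * c i (k + 2 - 2 * i) := by
    rw [branchCoeff, Nat.add_div_right k two_pos]
  have hshift : ∑ i ∈ Finset.range (k / 2 + 2), (-2 : ℝ) ^ i * (2 * i * c i (k + 2 - 2 * i)) =
      -4 * branchCoeff (tcoeff (pdx g)) k := by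
    rw [Finset.sum_range_succ', hx, Finset.mul_sum]
    simp only [Nat.cast_zero, mul_zero, zero_mul, add_zero]
    refine Finset.sum_congr rfl fun i _ ↦ ?_
    rw [show k + 2 - 2 * (i + 1) = k - 2 * i by omega]
    push_cast
    ring
  rw [sub_eq_add_neg, ← neg_mul, ← hshift, hy, h, Finset.mul_sum, ← Finset.sum_add_distrib]
  exact Finset.sum_congr rfl fun i _ ↦ by ring

theorem isBigO_pow_succ_of_hasDerivAt {E : Type*} [NormedAddCommGroup E] [NormedSpace ℝ E]
    {F F' : ℝ → E} (hF : ∀ t, HasDerivAt F (F' t) t) (h₀ : F 0 = 0) {N : ℕ}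
    (hF' : F' =O[𝓝 0] fun t ↦ t ^ N) : F =O[𝓝 0] fun t ↦ t ^ (N + 1) := by
  obtain ⟨C, hC, hbound⟩ := hF'.exists_pos
  obtain ⟨r, hr, hball⟩ := Metric.eventually_nhds_iff_ball.1 hbound.bound
  refine .of_bound C ?_
  filter_upwards [Metric.ball_mem_nhds 0 hr] with t ht
  have hle {s : ℝ} (hs : s ∈ Metric.closedBall 0 ‖t‖) : ‖F' s‖ ≤ C * ‖t‖ ^ N := by
    have hst : ‖s‖ ≤ ‖t‖ := by simpa using hs
    have := hball s (mem_ball_zero_iff.2 (hst.trans_lt (mem_ball_zero_iff.1 ht)))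
    rw [norm_pow] at this
    exact this.trans (by gcongr)
  have := (convex_closedBall (0 : ℝ) ‖t‖).norm_image_sub_le_of_norm_hasDerivWithin_le
    (fun s _ ↦ (hF s).hasDerivWithinAt) (fun s hs ↦ hle hs) (x := 0) (y := t) (by simp) (by simp)
  rw [h₀, sub_zero, sub_zero] at this
  rwa [norm_pow, pow_succ, ← mul_assoc]

theorem hasDerivAt_branch {g : ℝ × ℝ → ℝ} (hg : ContDiff ℝ ∞ g) (t : ℝ) :
    HasDerivAt (fun t ↦ g (-2 * t ^ 2, t))
      (pdy g (-2 * t ^ 2, t) - 4 * t * pdx g (-2 * t ^ 2, t)) t := by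
  refine (hasDerivAt_comp_prodMk (hg.differentiable (by simp) _)
    ((hasDerivAt_pow 2 t).const_mul (-2)) (hasDerivAt_id' t)).congr_deriv ?_
  push_cast
  ring

theorem isBigO_branch_sub_sum {g : ℝ × ℝ → ℝ} (hg : ContDiff ℝ ∞ g) (N : ℕ) :
    (fun t ↦ g (-2 * t ^ 2, t) - ∑ k ∈ Finset.range N, branchCoeff (tcoeff g) k * t ^ k)
      =O[𝓝 0] fun t ↦ t ^ N := by
  induction N using Nat.twoStepInduction generalizing g with
  | zero => simpa using (hasDerivAt_branch hg 0).continuousAt.norm.isBoundedUnder_le.isBigO_one ℝ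
  | one =>
    have := (hasDerivAt_branch hg 0).isBigO_sub
    simpa [branchCoeff, tcoeff_zero_zero, Prod.zero_eq_mk] using this
  | more N ihx ihy =>
    have hsum (t : ℝ) : HasDerivAt
        (fun t ↦ ∑ k ∈ Finset.range (N + 2), branchCoeff (tcoeff g) k * t ^ k)
        (∑ k ∈ Finset.range (N + 1), branchCoeff (tcoeff (pdy g)) k * t ^ k -
          4 * t * ∑ k ∈ Finset.range N, branchCoeff (tcoeff (pdx g)) k * t ^ k) t := by
      refine (HasDerivAt.fun_sum fun k _ ↦
        (hasDerivAt_pow k t).const_mul (branchCoeff (tcoeff g) k)).congr_deriv ?_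
      have hone : branchCoeff (tcoeff (pdy g)) 0 = branchCoeff (tcoeff g) 1 := by
        simp [branchCoeff, tcoeff_pdy]
      rw [Finset.sum_range_succ', Finset.sum_range_succ', Finset.sum_range_succ', hone,
        Finset.mul_sum, add_sub_right_comm, ← Finset.sum_sub_distrib]
      simp only [Nat.add_sub_cancel, Nat.cast_zero, pow_zero, zero_mul, mul_zero, zero_add,
        Nat.cast_one, mul_one, add_zero, Nat.sub_self]
      congr 1
      refine Finset.sum_congr rfl fun k _ ↦ ?_
      push_cast
      linear_combination t ^ (k + 1) * branchCoeff_tcoeff_succ_succ hg k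
    refine isBigO_pow_succ_of_hasDerivAt (fun t ↦ (hasDerivAt_branch hg t).sub (hsum t)) ?_ ?_
    · simp [Finset.sum_range_succ', branchCoeff, tcoeff_zero_zero, Prod.zero_eq_mk]
    · have hx : (fun t ↦ 4 * t * (pdx g (-2 * t ^ 2, t) -
          ∑ k ∈ Finset.range N, branchCoeff (tcoeff (pdx g)) k * t ^ k)) =O[𝓝 0]
            fun t ↦ t ^ (N + 1) := by
        simpa only [pow_succ', mul_assoc] using
          ((isBigO_refl (fun t : ℝ ↦ t) _).mul (ihx (contDiff_pdx hg))).const_mul_left 4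
      refine ((ihy (contDiff_pdy hg)).sub hx).congr_left fun t ↦ ?_
      ring

/-- Along the branch `x = -2 * y ^ 2`, the function `∂g/∂y` vanishes to order `j + 4` and the odd
part of `g` is `I * t ^ (2 * j + 5)` to leading order. The first condition makes the leading odd
term insensitive to the choice of coordinates. -/
def HasOddBranchTerm (g : ℝ × ℝ → ℝ) (j : ℕ) (I : ℝ) : Prop :=
  ((fun t ↦ pdy g (-2 * t ^ 2, t)) =O[𝓝 0] fun t ↦ t ^ (j + 4)) ∧
    (fun t ↦ g (-2 * t ^ 2, t) - g (-2 * t ^ 2, -t) - 2 * I * t ^ (2 * j + 5))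
      =o[𝓝 0] fun t ↦ t ^ (2 * j + 5)

theorem HasOddBranchTerm.add {g h : ℝ × ℝ → ℝ} {j : ℕ} {I J : ℝ} (hg : HasOddBranchTerm g j I)
    (hh : HasOddBranchTerm h j J) (hgs : ContDiff ℝ ∞ g) (hhs : ContDiff ℝ ∞ h) :
    HasOddBranchTerm (g + h) j (I + J) := by
  refine ⟨by rw [pdy_add hgs hhs]; exact hg.1.add hh.1, (hg.2.add hh.2).congr_left fun t ↦ ?_⟩
  simp only [Pi.add_apply]
  ring

theorem HasOddBranchTerm.of_lt {g : ℝ × ℝ → ℝ} {i j : ℕ} {I : ℝ} (hg : HasOddBranchTerm g j I)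
    (hij : i < j) : HasOddBranchTerm g i 0 := by
  refine ⟨hg.1.trans (isLittleO_pow_pow (by omega)).isBigO, ?_⟩
  have hpow : (fun t : ℝ ↦ t ^ (2 * j + 5)) =o[𝓝 0] fun t ↦ t ^ (2 * i + 5) :=
    isLittleO_pow_pow (by omega)
  refine ((hg.2.trans hpow).add (hpow.const_mul_left (2 * I))).congr_left fun t ↦ ?_
  ring

theorem hasOddBranchTerm_of_branchCoeff {g : ℝ × ℝ → ℝ} (hg : ContDiff ℝ ∞ g) {j : ℕ}
    (hpdy : ∀ k < j + 4, branchCoeff (tcoeff (pdy g)) k = 0)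
    (hodd : ∀ i < j + 2, branchCoeff (tcoeff g) (2 * i + 1) = 0) :
    HasOddBranchTerm g j (branchCoeff (tcoeff g) (2 * j + 5)) := by
  constructor
  · refine (isBigO_branch_sub_sum (contDiff_pdy hg) (j + 4)).congr_left fun t ↦ ?_
    rw [Finset.sum_eq_zero fun k hk ↦ by rw [hpdy k (Finset.mem_range.1 hk), zero_mul], sub_zero]
  · have hsum (t : ℝ) : ∑ k ∈ Finset.range (2 * j + 6), branchCoeff (tcoeff g) k * t ^ k -
        ∑ k ∈ Finset.range (2 * j + 6), branchCoeff (tcoeff g) k * (-t) ^ k =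
        2 * branchCoeff (tcoeff g) (2 * j + 5) * t ^ (2 * j + 5) := by
      rw [← Finset.sum_sub_distrib, Finset.sum_eq_single (2 * j + 5)]
      · rw [(show Odd (2 * j + 5) from ⟨j + 2, by ring⟩).neg_pow]
        ring
      · intro k hk hne
        rcases k.even_or_odd with heven | ⟨i, rfl⟩
        · rw [heven.neg_pow, sub_self]
        · have := Finset.mem_range.1 hk
          rw [hodd i (by omega), zero_mul, zero_mul, sub_zero]
      · simp
    have hlittle := isBigO_branch_sub_sum hg (2 * j + 6)
    have hneg := hlittle.comp_tendsto (continuous_neg.tendsto' (0 : ℝ) 0 neg_zero)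
    have hneg' : (fun t ↦ g (-2 * t ^ 2, -t) - ∑ k ∈ Finset.range (2 * j + 6),
        branchCoeff (tcoeff g) k * (-t) ^ k) =O[𝓝 0] fun t ↦ t ^ (2 * j + 6) := by
      simpa [Function.comp_def, (show Even (2 * j + 6) from ⟨j + 3, by ring⟩).neg_pow] using hneg
    refine ((hlittle.sub hneg').trans_isLittleO (isLittleO_pow_pow (by omega))).congr_left
      fun t ↦ ?_
    rw [← hsum]
    ring

end BranchExpansion

section VanishingOrder

variable {E F : Type*} [NormedAddCommGroup E] [NormedSpace ℝ E] [NormedAddCommGroup F]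
  [NormedSpace ℝ F] {N : ℕ}

/-- All derivatives of `h` of order less than `N` vanish at the origin; for smooth `h` this is
membership in the `N`-th power of the maximal ideal. -/
def VanishesToOrder (N : ℕ) (h : E → F) : Prop := ∀ i < N, iteratedFDeriv ℝ i h 0 = 0

theorem vanishesToOrder_one {h : E → F} : VanishesToOrder 1 h ↔ h 0 = 0 := by
  simp only [VanishesToOrder, Nat.lt_one_iff, forall_eq]
  rw [← norm_eq_zero, norm_iteratedFDeriv_zero, norm_eq_zero]

theorem VanishesToOrder.mono {M : ℕ} {h : E → F} (hh : VanishesToOrder N h) (hM : M ≤ N) :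
    VanishesToOrder M h :=
  fun i hi ↦ hh i (hi.trans_le hM)

theorem VanishesToOrder.sub {h k : E → F} (hh : VanishesToOrder N h) (hk : VanishesToOrder N k)
    (hhs : ContDiff ℝ ∞ h) (hks : ContDiff ℝ ∞ k) : VanishesToOrder N fun p ↦ h p - k p := by
  intro i hi
  rw [fun_iteratedFDeriv_sub_apply (hhs.of_le (mod_cast le_top)).contDiffAt
    (hks.of_le (mod_cast le_top)).contDiffAt, hh i hi, hk i hi, sub_zero]

theorem VanishesToOrder.mul {M : ℕ} {h k : E → ℝ} (hh : VanishesToOrder N h)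
    (hk : VanishesToOrder M k) (hhs : ContDiff ℝ ∞ h) (hks : ContDiff ℝ ∞ k) :
    VanishesToOrder (N + M) fun p ↦ h p * k p := by
  refine fun i hi ↦ norm_le_zero_iff.1 <|
    (norm_iteratedFDeriv_mul_le hhs hks 0 (mod_cast le_top)).trans (Finset.sum_nonpos fun l hl ↦ ?_)
  rcases lt_or_ge l N with hlN | hlN
  · simp [hh l hlN]
  · have := Finset.mem_range.1 hl
    simp [hk (i - l) (by omega)]

theorem VanishesToOrder.mul_right {h k : E → ℝ} (hh : VanishesToOrder N h)
    (hhs : ContDiff ℝ ∞ h) (hks : ContDiff ℝ ∞ k) : VanishesToOrder N fun p ↦ h p * k p :=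
  hh.mul (M := 0) (fun _ hi ↦ absurd hi (Nat.not_lt_zero _)) hhs hks

theorem VanishesToOrder.pow {h : E → ℝ} (hh : h 0 = 0) (hhs : ContDiff ℝ ∞ h) (m : ℕ) :
    VanishesToOrder m fun p ↦ h p ^ m := by
  induction m with
  | zero => exact fun _ hi ↦ absurd hi (Nat.not_lt_zero _)
  | succ m ih => simpa only [pow_succ] using ih.mul (vanishesToOrder_one.2 hh) (hhs.pow m) hhs

theorem VanishesToOrder.comp {G : Type*} [NormedAddCommGroup G] [NormedSpace ℝ G] {h : E → F}
    {φ : G → E} (hh : VanishesToOrder N h) (hhs : ContDiff ℝ ∞ h) (hφs : ContDiff ℝ ∞ φ)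
    (hφ : φ 0 = 0) : VanishesToOrder N fun p ↦ h (φ p) := by
  intro i hi
  set D := 1 + ∑ k ∈ Finset.range (i + 1), ‖iteratedFDeriv ℝ k φ 0‖
  have hD : 1 ≤ D := le_add_of_nonneg_right (by positivity)
  have hbound (k : ℕ) (hk : 1 ≤ k) (hki : k ≤ i) : ‖iteratedFDeriv ℝ k φ 0‖ ≤ D ^ k :=
    ((Finset.single_le_sum (f := fun k ↦ ‖iteratedFDeriv ℝ k φ 0‖) (fun _ _ ↦ norm_nonneg _)
      (Finset.mem_range_succ_iff.2 hki)).trans (le_add_of_nonneg_left zero_le_one)).trans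
        (le_self_pow₀ hD (Nat.one_le_iff_ne_zero.1 hk))
  refine norm_le_zero_iff.1 <|
    (norm_iteratedFDeriv_comp_le hhs hφs (mod_cast le_top) 0 (fun k hk ↦ ?_) hbound).trans
      (by simp : (i.factorial : ℝ) * 0 * D ^ i ≤ 0)
  rw [hφ, hh k (by omega), norm_zero]

theorem VanishesToOrder.clm_comp {G : Type*} [NormedAddCommGroup G] [NormedSpace ℝ G] {h : E → F}
    (hh : VanishesToOrder N h) (hhs : ContDiff ℝ ∞ h) (L : F →L[ℝ] G) :
    VanishesToOrder N fun p ↦ L (h p) := by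
  refine fun i hi ↦ norm_le_zero_iff.1 <|
    (L.norm_iteratedFDeriv_comp_left hhs.contDiffAt (mod_cast le_top)).trans ?_
  rw [hh i hi, norm_zero, mul_zero]

theorem VanishesToOrder.fderiv_apply {h : E → F} (hh : VanishesToOrder (N + 1) h)
    (hhs : ContDiff ℝ ∞ h) (v : E) : VanishesToOrder N fun p ↦ fderiv ℝ h p v := by
  have hfderiv : ContDiff ℝ ∞ (fderiv ℝ h) := hhs.fderiv_right (by simp)
  refine fun i hi ↦ norm_le_zero_iff.1 <|
    (norm_iteratedFDeriv_clm_apply_const hfderiv.contDiffAt (mod_cast le_top)).trans ?_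
  rw [norm_iteratedFDeriv_fderiv, hh (i + 1) (by omega), norm_zero, mul_zero]

theorem VanishesToOrder.tcoeff_eq_zero {h : ℝ × ℝ → ℝ} (hh : VanishesToOrder N h)
    (hhs : ContDiff ℝ ∞ h) {i j : ℕ} (hij : i + j < N) : tcoeff h i j = 0 := by
  induction N generalizing h i j with
  | zero => omega
  | succ N ih =>
    rcases j with _ | j
    · rcases i with _ | i
      · rw [tcoeff_zero_zero, vanishesToOrder_one.1 (hh.mono (by omega))]
      · have := ih (hh.fderiv_apply hhs (1, 0)) (contDiff_pdx hhs) (i := i) (j := 0) (by omega)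
        exact (mul_eq_zero.1 ((tcoeff_pdx hhs i 0).symm.trans this)).resolve_left (by positivity)
    · have := ih (hh.fderiv_apply hhs (0, 1)) (contDiff_pdy hhs) (i := i) (j := j) (by omega)
      exact (mul_eq_zero.1 ((tcoeff_pdy h i j).symm.trans this)).resolve_left (by positivity)

end VanishingOrder

section WhitneyEvenFunctions

open MeasureTheory
open scoped FourierTransform SchwartzMap

theorem exists_even_of_odd {K : ℝ → ℝ} (hK : ContDiff ℝ ∞ K) (hodd : Function.Odd K) :
    ∃ H : ℝ → ℝ, ContDiff ℝ ∞ H ∧ Function.Even H ∧ ∀ t, K t = t * H t := by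
  obtain ⟨H, hHs, hH, -⟩ := exists_hadamard (h := fun p : ℝ × ℝ ↦ K p.2) (by fun_prop)
  have hKH (t : ℝ) : K t = t * H (0, t) := by simpa [hodd.map_zero] using hH 0 t
  refine ⟨fun t ↦ H (0, t), by fun_prop, fun t ↦ ?_, hKH⟩
  rcases eq_or_ne t 0 with rfl | ht
  · simp
  · refine mul_left_cancel₀ ht ?_
    linear_combination hKH t + hKH (-t) - hodd t

/-- An integrable weight whose moments of even order are those of evaluation at the imaginary
unit. It extends an even function `E` to the imaginary axis as `E (r * I) ≈ ∫ l, E (r * l) * ψ l`,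
with the correct Taylor expansion at `0`. -/
structure HasImaginaryMoments (ψ : ℝ → ℝ) : Prop where
  integrable_pow_mul (n : ℕ) : Integrable fun l ↦ l ^ n * ψ l
  integral_pow_mul (k : ℕ) : ∫ l, l ^ (2 * k) * ψ l = (-1) ^ k

theorem iteratedDeriv_cexp_mul (a : ℂ) (n : ℕ) :
    iteratedDeriv n (fun x : ℝ ↦ Complex.exp (a * x)) =
      fun x : ℝ ↦ a ^ n * Complex.exp (a * x) := by
  induction n with
  | zero => simp
  | succ n ih =>
    rw [iteratedDeriv_succ, ih]
    funext x
    have hexp : HasDerivAt (fun x : ℝ ↦ Complex.exp (a * x)) (Complex.exp (a * x) * (a * 1)) x :=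
      ((Complex.ofRealCLM.hasDerivAt (x := x)).const_mul a).cexp
    rw [(hexp.const_mul _).deriv]
    ring

theorem exists_schwartz_fourier_eventuallyEq_cexp (a : ℂ) :
    ∃ p : 𝓢(ℝ, ℂ), 𝓕 (p : ℝ → ℂ) =ᶠ[𝓝 0] fun x : ℝ ↦ Complex.exp (a * x) := by
  let χ : ContDiffBump (0 : ℝ) := ⟨1, 2, by norm_num, by norm_num⟩
  have hexp : ContDiff ℝ ∞ fun x : ℝ ↦ Complex.exp (a * x) :=
    (contDiff_const.mul Complex.ofRealCLM.contDiff).cexp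
  let g : 𝓢(ℝ, ℂ) := HasCompactSupport.toSchwartzMap
    (f := fun x ↦ χ x • Complex.exp (a * x)) χ.hasCompactSupport.smul_right (χ.contDiff.smul hexp)
  refine ⟨𝓕⁻ g, ?_⟩
  rw [← SchwartzMap.fourier_coe, FourierInvPair.fourier_fourierInv_eq g]
  filter_upwards [χ.eventuallyEq_one] with x hx
  change χ x • Complex.exp (a * x) = _
  simp [hx]

theorem integrable_pow_smul_schwartzMap (p : 𝓢(ℝ, ℂ)) (n : ℕ) :
    Integrable fun x : ℝ ↦ x ^ n • p x := by
  have hcont : Continuous fun x : ℝ ↦ x ^ n • p x := (continuous_pow n).smul p.continuous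
  refine (p.integrable_pow_mul volume n).mono hcont.aestronglyMeasurable (.of_forall fun x ↦ ?_)
  simp

theorem exists_schwartz_integral_pow_mul :
    ∃ p : 𝓢(ℝ, ℂ), ∀ n : ℕ, ∫ x : ℝ, x ^ n • p x = Complex.I ^ n := by
  obtain ⟨p, hp⟩ := exists_schwartz_fourier_eventuallyEq_cexp (2 * Real.pi)
  refine ⟨p, fun n ↦ ?_⟩
  have hmoment : ∫ x : ℝ, (-2 * Real.pi * Complex.I * x : ℂ) ^ n • p x = (2 * Real.pi) ^ n := by
    have := congrFun (Real.iteratedDeriv_fourier (N := ⊤) (n := n)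
      (fun m _ ↦ integrable_pow_smul_schwartzMap p m) le_top) 0
    rw [hp.iteratedDeriv_eq, iteratedDeriv_cexp_mul, Real.fourier_eq] at this
    simpa using this.symm
  have hscale : (-2 * Real.pi * Complex.I : ℂ) ^ n ≠ 0 :=
    pow_ne_zero _ (by simp [Real.pi_ne_zero, Complex.I_ne_zero])
  refine mul_left_cancel₀ hscale ?_
  calc (-2 * Real.pi * Complex.I : ℂ) ^ n * ∫ x : ℝ, x ^ n • p x
      = ∫ x : ℝ, (-2 * Real.pi * Complex.I * x : ℂ) ^ n • p x := by
        rw [← integral_const_mul]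
        congr with x
        rw [mul_pow _ (x : ℂ), smul_eq_mul, mul_assoc _ _ (p x), Complex.real_smul,
          Complex.ofReal_pow]
    _ = (-2 * Real.pi * Complex.I : ℂ) ^ n * Complex.I ^ n := by
        rw [hmoment, ← mul_pow, mul_assoc _ Complex.I, Complex.I_mul_I]
        ring

theorem exists_hasImaginaryMoments : ∃ ψ : ℝ → ℝ, HasImaginaryMoments ψ := by
  obtain ⟨p, hp⟩ := exists_schwartz_integral_pow_mul
  have hre (n : ℕ) (x : ℝ) : x ^ n * (p x).re = RCLike.re (x ^ n • p x) :=
    (Complex.smul_re (x ^ n) (p x)).symm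
  refine ⟨fun x ↦ (p x).re, fun n ↦ ?_, fun k ↦ ?_⟩
  · simpa only [hre] using (integrable_pow_smul_schwartzMap p n).re
  · simp only [hre]
    rw [integral_re (integrable_pow_smul_schwartzMap p _), hp, pow_mul, Complex.I_sq]
    norm_cast

namespace HasImaginaryMoments

variable {ψ : ℝ → ℝ}

theorem integrable (h : HasImaginaryMoments ψ) : Integrable ψ := by
  simpa using h.integrable_pow_mul 0

theorem integral_eq_one (h : HasImaginaryMoments ψ) : ∫ l, ψ l = 1 := by
  simpa using h.integral_pow_mul 0

theorem neg_sq_mul (h : HasImaginaryMoments ψ) : HasImaginaryMoments fun l ↦ -(l ^ 2 * ψ l) := by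
  have hshift (n : ℕ) (l : ℝ) : l ^ n * -(l ^ 2 * ψ l) = -(l ^ (n + 2) * ψ l) := by ring
  refine ⟨fun n ↦ ?_, fun k ↦ ?_⟩
  · simp only [hshift]
    exact (h.integrable_pow_mul (n + 2)).neg
  · simp only [hshift, integral_neg]
    rw [show 2 * k + 2 = 2 * (k + 1) by ring, h.integral_pow_mul, pow_succ]
    ring

end HasImaginaryMoments

/-- Smooth even functions of compact support. -/
structure IsEvenTestFunction (E : ℝ → ℝ) : Prop where
  contDiff : ContDiff ℝ ∞ E
  even : Function.Even E
  hasCompactSupport : HasCompactSupport E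

/-- The function `ε` with `E t = ε (t ^ 2)` for an even `E`, continued to the negative half-line by
averaging dilates of `E` against `ψ`. Each of the first two summands is the constant `E 0` on the
half-line where `√` takes its junk value `0` (for the second, because `ψ` has integral one). -/
def evenExtension (E ψ : ℝ → ℝ) (s : ℝ) : ℝ :=
  E √s + (∫ l, E (√(-s) * l) * ψ l) - E 0

namespace IsEvenTestFunction

variable {E E₁ ψ : ℝ → ℝ}

theorem exists_norm_le (h : IsEvenTestFunction E) : ∃ C, ∀ t, ‖E t‖ ≤ C :=
  h.contDiff.continuous.bounded_above_of_compact_support h.hasCompactSupport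

theorem exists_deriv_eq_mul (h : IsEvenTestFunction E) :
    ∃ E₁, IsEvenTestFunction E₁ ∧ ∀ t, deriv E t = t * E₁ t := by
  have hodd : Function.Odd (deriv E) := fun t ↦ by
    have := deriv_comp_neg E t
    rw [funext h.even] at this
    rw [this, neg_neg]
  obtain ⟨E₁, hE₁s, hE₁even, hE₁⟩ :=
    exists_even_of_odd (contDiff_infty_iff_deriv.1 h.contDiff).2 hodd
  refine ⟨E₁, ⟨hE₁s, hE₁even, ?_⟩, hE₁⟩
  refine HasCompactSupport.intro (h.hasCompactSupport.isCompact.union isCompact_singleton)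
    (K := tsupport E ∪ {0}) fun t ht ↦ ?_
  obtain ⟨ht₀, htE⟩ : t ≠ 0 ∧ t ∉ tsupport E := by simpa using ht
  have hderiv : deriv E t = 0 := by
    rw [(notMem_tsupport_iff_eventuallyEq.1 htE).deriv_eq]
    exact deriv_const t 0
  exact (mul_eq_zero.1 ((hE₁ t).symm.trans hderiv)).resolve_left ht₀

theorem aestronglyMeasurable_dilate_mul (h : IsEvenTestFunction E) (hψ : Integrable ψ) (r : ℝ) :
    AEStronglyMeasurable (fun l ↦ E (r * l) * ψ l) :=
  (h.contDiff.continuous.comp (continuous_const_mul r)).aestronglyMeasurable.mul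
    hψ.aestronglyMeasurable

end IsEvenTestFunction

section EvenExtension

variable {E E₁ ψ : ℝ → ℝ}

theorem evenExtension_of_nonneg (E : ℝ → ℝ) (hψ : HasImaginaryMoments ψ) {s : ℝ} (hs : 0 ≤ s) :
    evenExtension E ψ s = E √s := by
  simp [evenExtension, Real.sqrt_eq_zero_of_nonpos (neg_nonpos.2 hs), integral_const_mul,
    hψ.integral_eq_one]

theorem evenExtension_of_nonpos (E ψ : ℝ → ℝ) {s : ℝ} (hs : s ≤ 0) :
    evenExtension E ψ s = ∫ l, E (√(-s) * l) * ψ l := by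
  simp [evenExtension, Real.sqrt_eq_zero_of_nonpos hs]

theorem continuous_evenExtension (h : IsEvenTestFunction E) (hψ : HasImaginaryMoments ψ) :
    Continuous (evenExtension E ψ) := by
  obtain ⟨C, hC⟩ := h.exists_norm_le
  have hE := h.contDiff.continuous
  have hint : Continuous fun s : ℝ ↦ ∫ l, E (√(-s) * l) * ψ l := by
    refine continuous_of_dominated (bound := fun l ↦ C * ‖ψ l‖)
      (fun s ↦ h.aestronglyMeasurable_dilate_mul hψ.integrable _)
      (fun s ↦ .of_forall fun l ↦ ?_) (hψ.integrable.norm.const_mul C) (.of_forall fun l ↦ ?_)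
    · rw [norm_mul]
      gcongr
      exact hC _
    · have : Continuous fun s : ℝ ↦ √(-s) := Real.continuous_sqrt.comp continuous_neg
      fun_prop
  exact ((hE.comp Real.continuous_sqrt).add hint).sub continuous_const

theorem hasDerivAt_comp_sqrt_mul (hE : Differentiable ℝ E) (hE₁ : ∀ t, deriv E t = t * E₁ t)
    (l : ℝ) {x : ℝ} (hx : 0 < x) :
    HasDerivAt (fun x ↦ E (√x * l)) (1 / 2 * (E₁ (√x * l) * l ^ 2)) x := by
  have hsqrt : √x ≠ 0 := (Real.sqrt_pos.2 hx).ne'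
  refine ((hE (√x * l)).hasDerivAt.comp x
    ((Real.hasDerivAt_sqrt hx.ne').mul_const l)).congr_deriv ?_
  rw [hE₁]
  field_simp

theorem hasDerivAt_evenExtension_of_pos (h : IsEvenTestFunction E)
    (hE₁ : ∀ t, deriv E t = t * E₁ t) (hψ : HasImaginaryMoments ψ) {s : ℝ} (hs : 0 < s) :
    HasDerivAt (evenExtension E ψ) (1 / 2 * evenExtension E₁ (fun l ↦ -(l ^ 2 * ψ l)) s) s := by
  rw [evenExtension_of_nonneg E₁ hψ.neg_sq_mul hs.le]
  have hd := hasDerivAt_comp_sqrt_mul (h.contDiff.differentiable (by simp)) hE₁ 1 hs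
  simp only [mul_one, one_pow] at hd
  refine hd.congr_of_eventuallyEq ?_
  filter_upwards [Ioi_mem_nhds hs] with x hx using evenExtension_of_nonneg E hψ (le_of_lt hx)

theorem hasDerivAt_evenExtension_of_neg (h : IsEvenTestFunction E) (h₁ : IsEvenTestFunction E₁)
    (hE₁ : ∀ t, deriv E t = t * E₁ t) (hψ : HasImaginaryMoments ψ) {s : ℝ} (hs : s < 0) :
    HasDerivAt (evenExtension E ψ) (1 / 2 * evenExtension E₁ (fun l ↦ -(l ^ 2 * ψ l)) s) s := by
  obtain ⟨C, hC⟩ := h.exists_norm_le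
  obtain ⟨C₁, hC₁⟩ := h₁.exists_norm_le
  have hd : HasDerivAt (fun x ↦ ∫ l, E (√(-x) * l) * ψ l)
      (∫ l, 1 / 2 * (E₁ (√(-s) * l) * -(l ^ 2 * ψ l))) s := by
    refine (hasDerivAt_integral_of_dominated_loc_of_deriv_le (s := Set.Iio 0)
      (F' := fun x l ↦ 1 / 2 * (E₁ (√(-x) * l) * -(l ^ 2 * ψ l)))
      (bound := fun l ↦ 1 / 2 * (C₁ * ‖l ^ 2 * ψ l‖)) (Iio_mem_nhds hs)
      (.of_forall fun x ↦ h.aestronglyMeasurable_dilate_mul hψ.integrable _) ?_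
      ((h₁.aestronglyMeasurable_dilate_mul hψ.neg_sq_mul.integrable _).const_mul _)
      (.of_forall fun l x _ ↦ ?_)
      (((hψ.integrable_pow_mul 2).norm.const_mul _).const_mul _)
      (.of_forall fun l x hx ↦ ?_)).2
    · exact hψ.integrable.bdd_mul
        (h.contDiff.continuous.comp (continuous_const_mul _)).aestronglyMeasurable
        (.of_forall fun l ↦ hC _)
    · rw [norm_mul, norm_mul, norm_neg, Real.norm_of_nonneg one_half_pos.le]
      gcongr
      exact hC₁ _
    · have hpos : 0 < -x := neg_pos.2 hx
      refine (((hasDerivAt_comp_sqrt_mul (h.contDiff.differentiable (by simp)) hE₁ l hpos).comp x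
        (hasDerivAt_neg x)).mul_const (ψ l)).congr_deriv ?_
      ring
  rw [evenExtension_of_nonpos E₁ _ hs.le, ← integral_const_mul]
  refine hd.congr_of_eventuallyEq ?_
  filter_upwards [Iio_mem_nhds hs] with x hx using evenExtension_of_nonpos E ψ (le_of_lt hx)

theorem hasDerivAt_evenExtension (h : IsEvenTestFunction E) (h₁ : IsEvenTestFunction E₁)
    (hE₁ : ∀ t, deriv E t = t * E₁ t) (hψ : HasImaginaryMoments ψ) (s : ℝ) :
    HasDerivAt (evenExtension E ψ) (1 / 2 * evenExtension E₁ (fun l ↦ -(l ^ 2 * ψ l)) s) s := by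
  have hne (y : ℝ) (hy : y ≠ 0) : HasDerivAt (evenExtension E ψ)
      (1 / 2 * evenExtension E₁ (fun l ↦ -(l ^ 2 * ψ l)) y) y :=
    hy.lt_or_gt.elim (hasDerivAt_evenExtension_of_neg h h₁ hE₁ hψ)
      (hasDerivAt_evenExtension_of_pos h hE₁ hψ)
  rcases eq_or_ne s 0 with rfl | hs
  · exact hasDerivAt_of_hasDerivAt_of_ne hne (continuous_evenExtension h hψ).continuousAt
      (continuous_const.mul (continuous_evenExtension h₁ hψ.neg_sq_mul)).continuousAt
  · exact hne s hs

theorem contDiff_evenExtension (h : IsEvenTestFunction E) (hψ : HasImaginaryMoments ψ) (n : ℕ) :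
    ContDiff ℝ n (evenExtension E ψ) := by
  induction n generalizing E ψ with
  | zero => exact contDiff_zero.2 (continuous_evenExtension h hψ)
  | succ n ih =>
    obtain ⟨E₁, h₁, hE₁⟩ := h.exists_deriv_eq_mul
    have hd := hasDerivAt_evenExtension h h₁ hE₁ hψ
    push_cast
    refine contDiff_succ_iff_deriv.2 ⟨fun s ↦ (hd s).differentiableAt, by simp, ?_⟩
    rw [funext fun s ↦ (hd s).deriv]
    exact contDiff_const.mul (ih h₁ hψ.neg_sq_mul)

end EvenExtension

theorem exists_contDiff_comp_sq_of_even {E : ℝ → ℝ} (hE : ContDiff ℝ ∞ E)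
    (heven : Function.Even E) :
    ∃ ε : ℝ → ℝ, ContDiff ℝ ∞ ε ∧ ∀ᶠ t in 𝓝 (0 : ℝ), E t = ε (t ^ 2) := by
  obtain ⟨ψ, hψ⟩ := exists_hasImaginaryMoments
  let χ : ContDiffBump (0 : ℝ) := ⟨1, 2, by norm_num, by norm_num⟩
  have h : IsEvenTestFunction fun t ↦ χ t * E t :=
    ⟨χ.contDiff.mul hE, fun t ↦ by simp only [heven t, χ.neg], χ.hasCompactSupport.mul_right⟩
  refine ⟨evenExtension (fun t ↦ χ t * E t) ψ,
    contDiff_infty.2 (contDiff_evenExtension h hψ), ?_⟩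
  filter_upwards [χ.eventuallyEq_one] with t ht
  have habs : χ |t| * E |t| = χ t * E t := by
    rcases abs_choice t with ht | ht <;> rw [ht]
    exact h.even t
  rw [evenExtension_of_nonneg _ hψ (sq_nonneg t), Real.sqrt_sq_eq_abs, habs, ht, Pi.one_apply,
    one_mul]

theorem exists_contDiff_even_add_odd {K : ℝ → ℝ} (hK : ContDiff ℝ ∞ K) :
    ∃ ε w : ℝ → ℝ, ContDiff ℝ ∞ ε ∧ ContDiff ℝ ∞ w ∧
      ∀ᶠ t in 𝓝 (0 : ℝ), K t = ε (t ^ 2) + t * w (t ^ 2) := by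
  obtain ⟨H, hHs, hHeven, hH⟩ := exists_even_of_odd (K := fun t ↦ (K t - K (-t)) / 2)
    (by fun_prop) fun t ↦ by simp only [neg_neg]; ring
  obtain ⟨ε, hεs, hε⟩ := exists_contDiff_comp_sq_of_even (E := fun t ↦ (K t + K (-t)) / 2)
    (by fun_prop) fun t ↦ by simp only [neg_neg]; ring
  obtain ⟨w, hws, hw⟩ := exists_contDiff_comp_sq_of_even hHs hHeven
  refine ⟨ε, w, hεs, hws, ?_⟩
  filter_upwards [hε, hw] with t hεt hwt
  rw [← hεt, ← hwt, ← hH]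
  ring

end WhitneyEvenFunctions

section Division

theorem eventually_eq_of_eventually_mul_eq {X : Type*} [TopologicalSpace X] {a b c : X → ℝ} {p : X}
    (ha : Continuous a) (hb : Continuous b) (hc : Dense {q | c q ≠ 0})
    (h : ∀ᶠ q in 𝓝 p, c q * a q = c q * b q) : ∀ᶠ q in 𝓝 p, a q = b q := by
  obtain ⟨U, hU, hUo, hpU⟩ := eventually_nhds_iff.1 h
  have hsub : U ∩ {q | c q ≠ 0} ⊆ {q | a q = b q} := fun q hq ↦ mul_left_cancel₀ hq.2 (hU q hq.1)
  filter_upwards [hUo.mem_nhds hpU] with q hq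
  exact closure_minimal hsub (isClosed_eq ha hb) (hc.open_subset_closure_inter hUo hq)

theorem dense_snd_ne_zero : Dense {p : ℝ × ℝ | p.2 ≠ 0} :=
  (dense_compl_singleton (0 : ℝ)).preimage isOpenMap_snd

theorem pdy_eq_of_hasDerivAt {g : ℝ × ℝ → ℝ} {p : ℝ × ℝ} {d : ℝ} (hg : DifferentiableAt ℝ g p)
    (h : HasDerivAt (fun s ↦ g (p.1, s)) d p.2) : pdy g p = d :=
  (hasDerivAt_pdy hg).unique h

theorem exists_division_by_graph {κ : ℝ → ℝ} (hκ : ContDiff ℝ ∞ κ) {q : ℝ × ℝ → ℝ}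
    (hq : ContDiff ℝ ∞ q) :
    ∃ Q : ℝ × ℝ → ℝ, ContDiff ℝ ∞ Q ∧
      (∀ p, q p = q (κ p.2, p.2) + (p.1 - κ p.2) * Q p) ∧
      ∀ y, Q (κ y, y) = pdx q (κ y, y) := by
  obtain ⟨H, hHs, hH, -⟩ :=
    exists_hadamard (h := fun p : ℝ × ℝ ↦ q (p.2 + κ p.1, p.1)) (by fun_prop)
  let Q : ℝ × ℝ → ℝ := fun p ↦ H (p.2, p.1 - κ p.2)
  have hQs : ContDiff ℝ ∞ Q := by fun_prop
  have hQ (p : ℝ × ℝ) : q p = q (κ p.2, p.2) + (p.1 - κ p.2) * Q p := by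
    simpa using hH p.2 (p.1 - κ p.2)
  refine ⟨Q, hQs, hQ, fun y ↦ ?_⟩
  have hderiv := (((hasDerivAt_id (κ y)).sub_const (κ y)).mul
    (hasDerivAt_pdx (p := (κ y, y)) (hQs.differentiable (by simp) _))).const_add (q (κ y, y))
  have := (hasDerivAt_pdx (p := (κ y, y)) (hq.differentiable (by simp) _)).unique
    (hderiv.congr_of_eventuallyEq (.of_forall fun x ↦ hQ (x, y)))
  simpa using this.symm

theorem eventually_eq_mul_integral_pdy {n V : ℝ × ℝ → ℝ} (hn : ContDiff ℝ ∞ n)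
    (hV : Continuous V) (haxis : ∀ᶠ x in 𝓝 (0 : ℝ), n (x, 0) = 0)
    (hpdy : ∀ᶠ p in 𝓝 0, pdy n p = V p) :
    ∀ᶠ p in 𝓝 0, n p = p.2 * ∫ s in (0 : ℝ)..1, V (p.1, s * p.2) := by
  obtain ⟨r, hr, hball⟩ := Metric.eventually_nhds_iff_ball.1 hpdy
  filter_upwards [Metric.ball_mem_nhds 0 hr, continuous_fst.continuousAt.eventually haxis]
    with p hp hp₀
  have hderiv : ∀ s ∈ Set.uIcc (0 : ℝ) 1,
      HasDerivAt (fun s ↦ n (p.1, s * p.2)) (p.2 * V (p.1, s * p.2)) s := by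
    intro s hs
    rw [Set.uIcc_of_le zero_le_one] at hs
    have hmem : (p.1, s * p.2) ∈ Metric.ball (0 : ℝ × ℝ) r := by
      simp only [Metric.mem_ball, dist_zero_right, Prod.norm_def, sup_lt_iff, norm_mul,
        Real.norm_of_nonneg hs.1] at hp ⊢
      exact ⟨hp.1, (mul_le_of_le_one_left (norm_nonneg _) hs.2).trans_lt hp.2⟩
    simpa [hball _ hmem] using hasDerivAt_comp_prodMk (hn.differentiable (by simp) _)
      (hasDerivAt_const s p.1) ((hasDerivAt_id s).mul_const p.2)
  have := intervalIntegral.integral_eq_sub_of_hasDerivAt hderiv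
    (Continuous.intervalIntegrable (by fun_prop) _ _)
  rw [intervalIntegral.integral_const_mul] at this
  simpa [hp₀] using this.symm

theorem exists_eq_pow_mul_of_tcoeff {g : ℝ × ℝ → ℝ} (hg : ContDiff ℝ ∞ g) {n : ℕ}
    (hn : ∀ i < n, tcoeff g 0 i = 0) :
    ∃ a : ℝ → ℝ, ContDiff ℝ ∞ a ∧ (∀ y, g (0, y) = y ^ n * a y) ∧ a 0 = tcoeff g 0 n := by
  induction n generalizing g with
  | zero => exact ⟨fun y ↦ g (0, y), by fun_prop, by simp, (tcoeff_zero_zero g).symm⟩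
  | succ n ih =>
    obtain ⟨a, has, ha, ha₀⟩ := ih (contDiff_pdy hg) fun i hi ↦ by
      rw [tcoeff_pdy, hn _ (Nat.succ_lt_succ hi), mul_zero]
    refine ⟨fun y ↦ ∫ s in (0 : ℝ)..1, s ^ n * a (s * y),
      contDiff_intervalIntegral_of_contDiff (k := fun q : ℝ × ℝ ↦ q.2 ^ n * a (q.2 * q.1))
        (by fun_prop) 0 1, fun y ↦ ?_, ?_⟩
    · have hderiv (s : ℝ) :
          HasDerivAt (fun s ↦ g (0, s * y)) (y ^ (n + 1) * (s ^ n * a (s * y))) s := by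
        have := hasDerivAt_comp_prodMk (hg.differentiable (by simp) _) (hasDerivAt_const s 0)
          ((hasDerivAt_id s).mul_const y)
        refine this.congr_deriv ?_
        simp only [id_eq, ha, mul_pow]
        ring
      have hcont := has.continuous
      have := intervalIntegral.integral_eq_sub_of_hasDerivAt (fun s _ ↦ hderiv s)
        (Continuous.intervalIntegrable (by fun_prop) 0 1)
      have hg₀ : g (0, 0) = 0 := (tcoeff_zero_zero g).symm.trans (hn 0 n.succ_pos)
      simpa [intervalIntegral.integral_const_mul, hg₀] using this.symm
    · rw [tcoeff_pdy] at ha₀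
      simp only [mul_zero, ha₀, intervalIntegral.integral_mul_const, integral_pow, one_pow,
        zero_pow n.succ_ne_zero]
      field_simp
      ring

end Division

section Reduction

/-- Smooth germs `x y² + y⁴ + c x² + ⋯`, where the dots have weighted degree at least five for the
weights two of `x` and one of `y`. -/
structure IsGullType (g : ℝ × ℝ → ℝ) : Prop where
  contDiff : ContDiff ℝ ∞ g
  tcoeff_of_weight_lt : ∀ i j, 2 * i + j < 4 → tcoeff g i j = 0
  tcoeff_one_two : tcoeff g 1 2 = 1
  tcoeff_zero_four : tcoeff g 0 4 = 1

theorem IsGullType.map_zero {g : ℝ × ℝ → ℝ} (hg : IsGullType g) : g 0 = 0 :=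
  (tcoeff_zero_zero g).symm.trans (hg.tcoeff_of_weight_lt 0 0 (by omega))

theorem tcoeff_one_one {q : ℝ × ℝ → ℝ} : tcoeff q 1 1 = pdx (pdy q) 0 := by simp [tcoeff]

theorem exists_zero_line {q : ℝ × ℝ → ℝ} (hq : ContDiff ℝ ∞ q)
    (hlow : ∀ i j, 2 * i + j < 3 → tcoeff q i j = 0) (hmixed : tcoeff q 1 1 ≠ 0) :
    ∃ η : ℝ → ℝ, ContDiff ℝ ∞ η ∧ ∀ᶠ x in 𝓝 0, q (x, x * η x) = 0 := by
  obtain ⟨a, has, ha, -⟩ := exists_eq_pow_mul_of_tcoeff hq (n := 3) fun i hi ↦ hlow 0 i (by omega)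
  obtain ⟨k, hks, hk, hk₀⟩ := exists_division_by_graph (κ := fun _ ↦ 0) contDiff_const hq
  obtain ⟨κ, hκs, hκ, hκ₀⟩ :=
    exists_hadamard (h := fun p : ℝ × ℝ ↦ k (p.2, p.2 * p.1)) (by fun_prop)
  have hk_zero : k (0, 0) = 0 := by
    rw [hk₀]
    simpa [tcoeff, ← Prod.mk_zero_zero] using hlow 1 0 (by omega)
  have hpdy_k : pdy k 0 = tcoeff q 1 1 := by
    rw [tcoeff_one_one, ← pdy_pdx_comm hq]
    refine pdy_eq_of_hasDerivAt (hks.differentiable (by simp) _) ?_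
    simpa only [Prod.fst_zero, Prod.snd_zero, hk₀] using
      hasDerivAt_pdy ((contDiff_pdx hq).differentiable (by simp) 0)
  have hκ_axis (e : ℝ) : κ (e, 0) = pdx k 0 + e * pdy k 0 := by
    rw [hκ₀]
    refine pdy_eq_of_hasDerivAt (p := (e, 0)) ?_ ?_
    · exact ContDiff.differentiable (n := ∞) (by fun_prop) (by simp) _
    · simpa [← Prod.mk_zero_zero] using hasDerivAt_comp_prodMk (hks.differentiable (by simp) _)
        (hasDerivAt_id (0 : ℝ)) ((hasDerivAt_id (0 : ℝ)).mul_const e)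
  obtain ⟨η, hηs, -, hη⟩ := exists_contDiff_implicit
    (Φ := fun p : ℝ × ℝ ↦ κ (p.2, p.1) + p.1 * p.2 ^ 3 * a (p.1 * p.2)) (by fun_prop) (a := 0)
    (θ₀ := -pdx k 0 / pdy k 0) (d := pdy k 0)
    (by simp [hκ_axis, div_mul_cancel₀ _ (hpdy_k ▸ hmixed : pdy k 0 ≠ 0)])
    (by simpa [hκ_axis] using ((hasDerivAt_id _).mul_const (pdy k 0)).const_add (pdx k 0))
    (hpdy_k ▸ hmixed)
  refine ⟨η, hηs, hη.mono fun x hx ↦ ?_⟩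
  have hkη : k (x, x * η x) = x * κ (η x, x) := by simpa [hk_zero] using hκ (η x) x
  rw [hk, ha, sub_zero, hkη]
  linear_combination x ^ 2 * hx

theorem exists_sheared_eq_mul {q : ℝ × ℝ → ℝ} (hq : ContDiff ℝ ∞ q)
    (hlow : ∀ i j, 2 * i + j < 3 → tcoeff q i j = 0) {η : ℝ → ℝ} (hη : ContDiff ℝ ∞ η)
    (hline : ∀ᶠ x in 𝓝 0, q (x, x * η x) = 0) :
    ∃ (a : ℝ → ℝ) (m : ℝ × ℝ → ℝ), ContDiff ℝ ∞ a ∧ ContDiff ℝ ∞ m ∧ a 0 = tcoeff q 0 3 ∧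
      m 0 = tcoeff q 1 1 ∧ ∀ᶠ p in 𝓝 (0 : ℝ × ℝ),
        q (p.1, p.2 + p.1 * η p.1) = p.2 * (p.2 ^ 2 * a p.2 + p.1 * m p) := by
  obtain ⟨a, has, ha, ha₀⟩ := exists_eq_pow_mul_of_tcoeff hq (n := 3) fun i hi ↦ hlow 0 i (by omega)
  have hpdy := contDiff_pdy hq
  have hshear : ContDiff ℝ ∞ fun p : ℝ × ℝ ↦ q (p.1, p.2 + p.1 * η p.1) := by fun_prop
  obtain ⟨q₁, hq₁s, hq₁, hq₁₀⟩ := exists_hadamard hshear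
  obtain ⟨m, hms, hm, hm₀⟩ := exists_division_by_graph (κ := fun _ ↦ 0) contDiff_const hq₁s
  have hq₁_axis (x : ℝ) : q₁ (x, 0) = pdy q (x, x * η x) := by
    rw [hq₁₀]
    refine pdy_eq_of_hasDerivAt (p := (x, 0)) (hshear.differentiable (by simp) _) ?_
    simpa using hasDerivAt_comp_prodMk (hq.differentiable (by simp) _) (hasDerivAt_const (0 : ℝ) x)
      ((hasDerivAt_id (0 : ℝ)).add_const (x * η x))
  have hq₁_zero (y : ℝ) : q₁ (0, y) = y ^ 2 * a y := by
    have hq₀ : q (0, 0) = 0 := (tcoeff_zero_zero q).symm.trans (hlow 0 0 (by omega))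
    have hq₁y : y ^ 3 * a y = y * q₁ (0, y) := by simpa [hq₀, ha] using hq₁ 0 y
    rcases eq_or_ne y 0 with rfl | hy
    · simpa [hq₁_axis, tcoeff, ← Prod.mk_zero_zero] using hlow 0 1 (by omega)
    · refine mul_left_cancel₀ hy ?_
      linear_combination -hq₁y
  refine ⟨a, m, has, hms, ha₀, ?_, ?_⟩
  · have hη' : HasDerivAt (fun x ↦ x * η x) (1 * η 0 + 0 * deriv η 0) 0 :=
      (hasDerivAt_id' (0 : ℝ)).fun_mul (hη.differentiable (by simp) 0).hasDerivAt
    have hd := hasDerivAt_comp_prodMk (hpdy.differentiable (by simp) _) (hasDerivAt_id' (0 : ℝ)) hη'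
    have hpdyy : pdy (pdy q) (0, 0) = 0 := by
      simpa [tcoeff, ← Prod.mk_zero_zero] using hlow 0 2 (by omega)
    simp only [← hq₁_axis] at hd
    rw [tcoeff_one_one, ← Prod.mk_zero_zero, hm₀,
      (hasDerivAt_pdx (p := (0, 0)) (hq₁s.differentiable (by simp) _)).unique hd]
    simp [hpdyy]
  · filter_upwards [continuous_fst.continuousAt.eventually hline] with p hp
    have := hq₁ p.1 p.2
    simp only [zero_add, hp, smul_eq_mul] at this
    rw [this, hm, hq₁_zero, sub_zero]

theorem exists_factor_through_branch {a : ℝ → ℝ} {m : ℝ × ℝ → ℝ} (ha : ContDiff ℝ ∞ a)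
    (hm : ContDiff ℝ ∞ m) (hm₀ : m 0 ≠ 0) :
    ∃ (σ : ℝ → ℝ) (H : ℝ × ℝ → ℝ), ContDiff ℝ ∞ σ ∧ ContDiff ℝ ∞ H ∧ σ 0 = -a 0 / m 0 ∧
      H 0 = m 0 ∧ ∀ᶠ p in 𝓝 (0 : ℝ × ℝ),
        p.2 ^ 2 * a p.2 + p.1 * m p = (p.1 - p.2 ^ 2 * σ p.2) * H p := by
  rw [← Prod.mk_zero_zero] at hm₀ ⊢
  obtain ⟨σ, hσs, hσ₀, hσ⟩ := exists_contDiff_implicit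
    (Φ := fun p : ℝ × ℝ ↦ a p.1 + p.2 * m (p.1 ^ 2 * p.2, p.1)) (by fun_prop) (a := 0)
    (θ₀ := -a 0 / m (0, 0)) (d := m (0, 0)) (by simp [div_mul_cancel₀ _ hm₀])
    (by simpa using ((hasDerivAt_id _).mul_const (m (0, 0))).const_add (a 0)) hm₀
  have hq : ContDiff ℝ ∞ fun p : ℝ × ℝ ↦ p.2 ^ 2 * a p.2 + p.1 * m p := by fun_prop
  obtain ⟨H, hHs, hH, hH₀⟩ := exists_division_by_graph (κ := fun y ↦ y ^ 2 * σ y) (by fun_prop) hq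
  refine ⟨σ, H, hσs, hHs, hσ₀, ?_, ?_⟩
  · have hd : HasDerivAt (fun x ↦ (0 : ℝ) ^ 2 * a 0 + x * m (x, 0)) (m (0, 0)) 0 := by
      simpa using ((hasDerivAt_id (0 : ℝ)).mul (hasDerivAt_pdx (p := (0, 0))
        (hm.differentiable (by simp) _))).const_add ((0 : ℝ) ^ 2 * a 0)
    have := (hasDerivAt_pdx (p := (0, 0)) (hq.differentiable (by simp) _)).unique hd
    simpa [this] using hH₀ 0
  · filter_upwards [continuous_snd.continuousAt.eventually hσ] with p hp
    rw [hH p]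
    linear_combination p.2 ^ 2 * hp

theorem exists_reparametrization_of_branch {σ : ℝ → ℝ} (hσ : ContDiff ℝ ∞ σ) (hσ₀ : σ 0 = -2) :
    ∃ N : ℝ → ℝ, ContDiff ℝ ∞ N ∧ N 0 = 1 ∧
      ∀ᶠ t in 𝓝 0, (t * N t) ^ 2 * σ (t * N t) = -2 * t ^ 2 := by
  have hderiv : HasDerivAt (fun s : ℝ ↦ s ^ 2 * σ (0 * s) + 2) (-4) 1 := by
    simp only [zero_mul, hσ₀]
    exact (((hasDerivAt_pow 2 (1 : ℝ)).mul_const (-2)).add_const 2).congr_deriv (by norm_num)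
  obtain ⟨N, hNs, hN₀, hN⟩ := exists_contDiff_implicit
    (Φ := fun p : ℝ × ℝ ↦ p.2 ^ 2 * σ (p.1 * p.2) + 2) (by fun_prop) (a := 0) (by simp [hσ₀])
    hderiv (by norm_num)
  exact ⟨N, hNs, hN₀, hN.mono fun t ht ↦ by linear_combination t ^ 2 * ht⟩

theorem IsGullType.exists_critical_coordinate {g : ℝ × ℝ → ℝ} (hg : IsGullType g) :
    ∃ ν u : ℝ × ℝ → ℝ, ContDiff ℝ ∞ ν ∧ ContDiff ℝ ∞ u ∧ ν 0 = 0 ∧ pdy ν 0 = 1 ∧ u 0 = 2 ∧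
      ∀ᶠ p in 𝓝 0, pdy (fun q ↦ g (q.1, ν q)) p = p.2 * (p.1 + 2 * p.2 ^ 2) * u p := by
  have hgs := hg.contDiff
  have hlow (i j : ℕ) (hij : 2 * i + j < 3) : tcoeff (pdy g) i j = 0 := by
    rw [tcoeff_pdy, hg.tcoeff_of_weight_lt i (j + 1) (by omega), mul_zero]
  have hmixed : tcoeff (pdy g) 1 1 = 2 := by norm_num [tcoeff_pdy, hg.tcoeff_one_two]
  have hcubic : tcoeff (pdy g) 0 3 = 4 := by norm_num [tcoeff_pdy, hg.tcoeff_zero_four]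
  obtain ⟨η, hηs, hη⟩ := exists_zero_line (contDiff_pdy hgs) hlow (by norm_num [hmixed])
  obtain ⟨a, m, has, hms, ha₀, hm₀, hshear⟩ :=
    exists_sheared_eq_mul (contDiff_pdy hgs) hlow hηs hη
  obtain ⟨σ, H, hσs, hHs, hσ₀, hH₀, hH⟩ :=
    exists_factor_through_branch has hms (by norm_num [hm₀, hmixed])
  obtain ⟨N, hNs, hN₀, hN⟩ :=
    exists_reparametrization_of_branch hσs (by norm_num [hσ₀, ha₀, hm₀, hmixed, hcubic])
  have : ContDiff ℝ ∞ (deriv N) := hNs.deriv'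
  have hν : ContDiff ℝ ∞ fun p : ℝ × ℝ ↦ p.2 * N p.2 + p.1 * η p.1 := by fun_prop
  have hν' (p : ℝ × ℝ) :
      HasDerivAt (fun t ↦ t * N t + p.1 * η p.1) (1 * N p.2 + p.2 * deriv N p.2) p.2 :=
    ((hasDerivAt_id' p.2).fun_mul
      (hNs.differentiable (by simp) _).hasDerivAt).add_const (p.1 * η p.1)
  refine ⟨fun p ↦ p.2 * N p.2 + p.1 * η p.1,
    fun p ↦ N p.2 * (N p.2 + p.2 * deriv N p.2) * H (p.1, p.2 * N p.2), hν, by fun_prop, by simp,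
    ?_, by simp [hN₀, hH₀, hm₀, hmixed, Prod.mk_zero_zero], ?_⟩
  · exact (pdy_eq_of_hasDerivAt (hν.differentiable (by simp) 0) (hν' 0)).trans (by simp [hN₀])
  · have hscale : Tendsto (fun p : ℝ × ℝ ↦ (p.1, p.2 * N p.2)) (𝓝 0) (𝓝 0) :=
      tendsto_zero_of_contDiff (by fun_prop) (by simp)
    filter_upwards [hscale.eventually hshear, hscale.eventually hH,
      continuous_snd.continuousAt.eventually hN] with p hshear hH hN
    rw [pdy_eq_of_hasDerivAt (ContDiff.differentiable (n := ∞) (by fun_prop) (by simp) _)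
      (hasDerivAt_comp_prodMk (a := fun _ ↦ p.1) (b := fun t ↦ t * N t + p.1 * η p.1)
        (hgs.differentiable (by simp) _) (hasDerivAt_const _ _) (hν' p)),
      hshear, hH, hN]
    ring

theorem tendsto_branch : Tendsto (fun t : ℝ ↦ (-2 * t ^ 2, t)) (𝓝 0) (𝓝 0) :=
  tendsto_zero_of_contDiff (by fun_prop) (by simp)

theorem exists_value_on_branch {n u : ℝ × ℝ → ℝ} (hn : ContDiff ℝ ∞ n) (hu : ContDiff ℝ ∞ u)
    (haxis : ∀ᶠ x in 𝓝 0, n (x, 0) = 0)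
    (hpdy : ∀ᶠ p in 𝓝 0, pdy n p = p.2 * (p.1 + 2 * p.2 ^ 2) * u p) :
    ∃ K : ℝ → ℝ, ContDiff ℝ ∞ K ∧ K 0 = -(u 0 / 2) ∧
      ∀ᶠ t in 𝓝 0, n (-2 * t ^ 2, t) = t ^ 4 * K t := by
  refine ⟨fun t ↦ ∫ s in (0 : ℝ)..1, (2 * s ^ 3 - 2 * s) * u (-2 * t ^ 2, s * t),
    contDiff_intervalIntegral_of_contDiff
      (k := fun q : ℝ × ℝ ↦ (2 * q.2 ^ 3 - 2 * q.2) * u (-2 * q.1 ^ 2, q.2 * q.1))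
      (by fun_prop) 0 1, ?_, ?_⟩
  · have : ∫ s in (0 : ℝ)..1, (2 * s ^ 3 - 2 * s) = -1 / 2 := by
      rw [intervalIntegral.integral_sub (Continuous.intervalIntegrable (by fun_prop) _ _)
        (Continuous.intervalIntegrable (by fun_prop) _ _), intervalIntegral.integral_const_mul,
        intervalIntegral.integral_const_mul]
      norm_num
    simp [this, Prod.mk_zero_zero]
    ring
  · filter_upwards [tendsto_branch.eventually (eventually_eq_mul_integral_pdy hn
      (V := fun p ↦ p.2 * (p.1 + 2 * p.2 ^ 2) * u p) (by fun_prop) haxis hpdy)] with t ht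
    rw [ht, ← intervalIntegral.integral_const_mul, ← intervalIntegral.integral_const_mul]
    congr 1 with s
    ring

/-- Germs `n` with `n(x, 0) = 0` whose fold locus is the union of the axis `y = 0` and the branch
`x + 2 y² = 0`, normalised so that the value `-t⁴ (1 + t w(t²))` on the point `(-2 t², t)` of the
branch has even part `-t⁴`. -/
structure IsGullNormalForm (n : ℝ × ℝ → ℝ) (w : ℝ → ℝ) : Prop where
  contDiff : ContDiff ℝ ∞ n
  contDiff_odd : ContDiff ℝ ∞ w
  eventually_axis : ∀ᶠ x in 𝓝 0, n (x, 0) = 0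
  exists_pdy_eq : ∃ u : ℝ × ℝ → ℝ, ContDiff ℝ ∞ u ∧ u 0 = 2 ∧
    ∀ᶠ p in 𝓝 0, pdy n p = p.2 * (p.1 + 2 * p.2 ^ 2) * u p
  eventually_branch : ∀ᶠ t in 𝓝 0, n (-2 * t ^ 2, t) = -t ^ 4 * (1 + t * w (t ^ 2))

theorem exists_isGullNormalForm_mul {n u : ℝ × ℝ → ℝ} (hn : ContDiff ℝ ∞ n) (hu : ContDiff ℝ ∞ u)
    (hu₀ : u 0 = 2) (haxis : ∀ᶠ x in 𝓝 0, n (x, 0) = 0)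
    (hpdy : ∀ᶠ p in 𝓝 0, pdy n p = p.2 * (p.1 + 2 * p.2 ^ 2) * u p) :
    ∃ ρ w : ℝ → ℝ, ContDiff ℝ ∞ ρ ∧ ρ 0 = 1 ∧ IsGullNormalForm (fun p ↦ ρ p.1 * n p) w := by
  obtain ⟨K, hKs, hK₀, hK⟩ := exists_value_on_branch hn hu haxis hpdy
  obtain ⟨ε, w, hεs, hws, hεw⟩ := exists_contDiff_even_add_odd hKs
  have hε₀ : ε 0 = -1 := by simpa [hK₀, hu₀] using hεw.self_of_nhds.symm
  obtain ⟨ρ, hρs, hρ₀, hρ⟩ := exists_contDiff_implicit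
    (Φ := fun p : ℝ × ℝ ↦ p.2 * ε (-p.1 / 2) + 1) (by fun_prop) (a := 0) (θ₀ := 1) (d := -1)
    (by simp [hε₀])
    (by simpa [hε₀] using ((hasDerivAt_id (1 : ℝ)).mul_const (-1)).add_const 1) (by norm_num)
  refine ⟨ρ, fun s ↦ -ρ (-2 * s) * w s, hρs, hρ₀, by fun_prop, by fun_prop, ?_, ?_, ?_⟩
  · exact haxis.mono fun x hx ↦ by simp [hx]
  · refine ⟨fun p ↦ ρ p.1 * u p, by fun_prop, by simp [hρ₀, hu₀], hpdy.mono fun p hp ↦ ?_⟩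
    rw [pdy_eq_of_hasDerivAt (ContDiff.differentiable (n := ∞) (by fun_prop) (by simp) _)
      ((hasDerivAt_pdy (hn.differentiable (by simp) p)).const_mul (ρ p.1)), hp]
    ring
  · have hsq : Tendsto (fun t : ℝ ↦ -2 * t ^ 2) (𝓝 0) (𝓝 0) :=
      tendsto_zero_of_contDiff (by fun_prop) (by simp)
    filter_upwards [hK, hεw, hsq.eventually hρ] with t hK hεw hρ
    rw [show -(-2 * t ^ 2) / 2 = t ^ 2 by ring] at hρ
    rw [hK, hεw]
    linear_combination t ^ 4 * hρ

theorem IsGullType.exists_isGullNormalForm {g : ℝ × ℝ → ℝ} (hg : IsGullType g) :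
    ∃ n w, IsGullNormalForm n w ∧ AEquiv (prenormal g) (prenormal n) := by
  have hgs := hg.contDiff
  obtain ⟨ν, u, hνs, hus, hν₀, hν', hu₀, hpdy⟩ := hg.exists_critical_coordinate
  have hpdy_sub (p : ℝ × ℝ) : pdy (fun q ↦ g (q.1, ν q) - g (q.1, ν (q.1, 0))) p =
      pdy (fun q ↦ g (q.1, ν q)) p :=
    pdy_eq_of_hasDerivAt (ContDiff.differentiable (n := ∞) (by fun_prop) (by simp) _)
      (HasDerivAt.sub_const (g (p.1, ν (p.1, 0))) (hasDerivAt_pdy (g := fun q ↦ g (q.1, ν q))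
        (ContDiff.differentiable (n := ∞) (by fun_prop) (by simp) p)))
  obtain ⟨ρ, w, hρs, hρ₀, hnf⟩ := exists_isGullNormalForm_mul
    (n := fun p ↦ g (p.1, ν p) - g (p.1, ν (p.1, 0))) (by fun_prop) hus hu₀
    (Eventually.of_forall fun x ↦ sub_self _) (by simpa only [hpdy_sub] using hpdy)
  have hψs : ContDiff ℝ ∞ fun q : ℝ × ℝ ↦ ρ q.1 * (q.2 - g (q.1, ν (q.1, 0))) := by fun_prop
  refine ⟨_, w, hnf, .prenormal_of_fiberwise hνs hψs hν₀
    (by simp [hν₀, hg.map_zero, Prod.mk_zero_zero]) (by simp [hν']) ?_ (.of_forall fun p ↦ rfl)⟩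
  rw [pdy_eq_of_hasDerivAt (hψs.differentiable (by simp) 0)
    (((hasDerivAt_id' (0 : ℝ)).sub_const (g (0, ν (0, 0)))).const_mul (ρ 0))]
  simp [hρ₀]

end Reduction

section Uniqueness

theorem exists_eq_sq_mul_of_pdy {R V : ℝ × ℝ → ℝ} (hR : ContDiff ℝ ∞ R) (hV : ContDiff ℝ ∞ V)
    (haxis : ∀ᶠ x in 𝓝 0, R (x, 0) = 0)
    (hpdy : ∀ᶠ p in 𝓝 0, pdy R p = p.2 * (p.1 + 2 * p.2 ^ 2) * V p) :
    ∃ A : ℝ × ℝ → ℝ, ContDiff ℝ ∞ A ∧ A 0 = 0 ∧ ∀ᶠ p in 𝓝 0, R p = p.2 ^ 2 * A p := by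
  refine ⟨fun p ↦ ∫ s in (0 : ℝ)..1, s * (p.1 + 2 * (s * p.2) ^ 2) * V (p.1, s * p.2),
    contDiff_intervalIntegral_of_contDiff (k := fun q : (ℝ × ℝ) × ℝ ↦
      q.2 * (q.1.1 + 2 * (q.2 * q.1.2) ^ 2) * V (q.1.1, q.2 * q.1.2)) (by fun_prop) 0 1,
    by simp, ?_⟩
  filter_upwards [eventually_eq_mul_integral_pdy hR
    (V := fun p ↦ p.2 * (p.1 + 2 * p.2 ^ 2) * V p) (by fun_prop) haxis hpdy] with p hp
  rw [hp, ← intervalIntegral.integral_const_mul, ← intervalIntegral.integral_const_mul]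
  congr 1 with s
  ring

theorem exists_eq_mul_of_branch_eq_zero {A : ℝ × ℝ → ℝ} (hA : ContDiff ℝ ∞ A)
    (hbranch : ∀ᶠ t in 𝓝 0, t ^ 2 * A (-2 * t ^ 2, t) = 0) :
    ∃ B : ℝ × ℝ → ℝ, ContDiff ℝ ∞ B ∧ ∀ᶠ p in 𝓝 0, A p = (p.1 + 2 * p.2 ^ 2) * B p := by
  obtain ⟨B, hBs, hB, -⟩ := exists_division_by_graph (κ := fun y ↦ -2 * y ^ 2) (by fun_prop) hA
  have hdense : Dense {t : ℝ | t ^ 2 ≠ 0} :=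
    (dense_compl_singleton (0 : ℝ)).mono fun t ht ↦ pow_ne_zero 2 ht
  have hzero : ∀ᶠ t in 𝓝 (0 : ℝ), A (-2 * t ^ 2, t) = 0 :=
    eventually_eq_of_eventually_mul_eq (c := (· ^ 2)) (by fun_prop) continuous_const hdense
      (by simpa only [mul_zero] using hbranch)
  refine ⟨B, hBs, ?_⟩
  filter_upwards [continuous_snd.continuousAt.eventually hzero] with p hp
  rw [hB, hp]
  ring

theorem exists_eq_sq_mul_sq_of_pdy {R V : ℝ × ℝ → ℝ} (hR : ContDiff ℝ ∞ R) (hV : ContDiff ℝ ∞ V)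
    (haxis : ∀ᶠ x in 𝓝 0, R (x, 0) = 0)
    (hpdy : ∀ᶠ p in 𝓝 0, pdy R p = p.2 * (p.1 + 2 * p.2 ^ 2) * V p)
    (hbranch : ∀ᶠ t in 𝓝 0, R (-2 * t ^ 2, t) = 0) :
    ∃ ρ : ℝ × ℝ → ℝ, ContDiff ℝ ∞ ρ ∧
      ∀ᶠ p in 𝓝 0, R p = (p.2 * (p.1 + 2 * p.2 ^ 2)) ^ 2 * ρ p := by
  obtain ⟨A, hAs, -, hA⟩ := exists_eq_sq_mul_of_pdy hR hV haxis hpdy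
  obtain ⟨B, hBs, hB⟩ := exists_eq_mul_of_branch_eq_zero hAs (by
    filter_upwards [hbranch, tendsto_branch.eventually hA] with t ht htA using htA.symm.trans ht)
  have hRB : R =ᶠ[𝓝 0] fun p ↦ p.2 ^ 2 * ((p.1 + 2 * p.2 ^ 2) * B p) := by
    filter_upwards [hA, hB] with p hA hB using by rw [hA, hB]
  have hpdyB (p : ℝ × ℝ) : pdy (fun q ↦ q.2 ^ 2 * ((q.1 + 2 * q.2 ^ 2) * B q)) p =
      2 * p.2 * ((p.1 + 2 * p.2 ^ 2) * B p) +
        p.2 ^ 2 * (4 * p.2 * B p + (p.1 + 2 * p.2 ^ 2) * pdy B p) := by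
    refine pdy_eq_of_hasDerivAt (ContDiff.differentiable (n := ∞) (by fun_prop) (by simp) _)
      (((hasDerivAt_pow 2 p.2).fun_mul ((((hasDerivAt_pow 2 p.2).const_mul 2).const_add p.1).fun_mul
        (hasDerivAt_pdy (hBs.differentiable (by simp) p)))).congr_deriv ?_)
    push_cast
    ring
  have hcancel : ∀ᶠ p in 𝓝 0, 4 * p.2 ^ 2 * B p =
      (p.1 + 2 * p.2 ^ 2) * (V p - 2 * B p - p.2 * pdy B p) := by
    have := contDiff_pdy hBs
    refine eventually_eq_of_eventually_mul_eq (c := Prod.snd) (by fun_prop) (by fun_prop)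
      dense_snd_ne_zero ?_
    filter_upwards [hpdy, pdy_congr hRB] with p hp hpB
    rw [hpB, hpdyB] at hp
    linear_combination hp
  obtain ⟨ρ, hρs, hρ⟩ := exists_eq_mul_of_branch_eq_zero hBs (by
    filter_upwards [tendsto_branch.eventually hcancel] with t ht
    linear_combination ht / 4)
  refine ⟨ρ, hρs, ?_⟩
  filter_upwards [hRB, hρ] with p hRB hρ
  rw [hRB, hρ]
  ring

theorem exists_second_order_expansion {n : ℝ × ℝ → ℝ} (hn : ContDiff ℝ ∞ n) :
    ∃ K : (ℝ × ℝ) × ℝ → ℝ, ContDiff ℝ ∞ K ∧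
      ∀ p s, n (p.1, p.2 + s) = n p + s * pdy n p + s ^ 2 * K (p, s) := by
  have hshift : ContDiff ℝ ∞ fun q : (ℝ × ℝ) × ℝ ↦ n (q.1.1, q.1.2 + q.2) := by fun_prop
  obtain ⟨H, hHs, hH, hH₀⟩ := exists_hadamard hshift
  obtain ⟨K, hKs, hK, -⟩ := exists_hadamard hHs
  have hHpdy (p : ℝ × ℝ) : H (p, 0) = pdy n p := by
    have hline := (hshift.differentiable (by simp) (p, 0)).hasFDerivAt.comp_hasDerivAt (0 : ℝ)
      ((hasDerivAt_const (0 : ℝ) p).prodMk (hasDerivAt_id' 0))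
    have hpdy := hasDerivAt_comp_prodMk (hn.differentiable (by simp) (p.1, p.2 + 0))
      (hasDerivAt_const (0 : ℝ) p.1) ((hasDerivAt_id' (0 : ℝ)).const_add p.2)
    rw [hH₀, hline.unique hpdy]
    simp
  refine ⟨K, hKs, fun p s ↦ ?_⟩
  have := hH p s
  simp only [add_zero, smul_eq_mul, hK p s, hHpdy] at this
  rw [this]
  ring

theorem IsGullNormalForm.exists_expansion {n : ℝ × ℝ → ℝ} {w : ℝ → ℝ} (h : IsGullNormalForm n w) :
    ∃ (u : ℝ × ℝ → ℝ) (K : (ℝ × ℝ) × ℝ → ℝ), ContDiff ℝ ∞ u ∧ ContDiff ℝ ∞ K ∧ u 0 = 2 ∧ K 0 = 0 ∧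
      ∀ᶠ p in 𝓝 0, ∀ s, n (p.1, p.2 + s) =
        n p + s * (p.2 * (p.1 + 2 * p.2 ^ 2) * u p) + s ^ 2 * K (p, s) := by
  obtain ⟨u, hus, hu₀, hpdy⟩ := h.exists_pdy_eq
  obtain ⟨K, hKs, hK⟩ := exists_second_order_expansion h.contDiff
  obtain ⟨A, hAs, hA₀, hA⟩ := exists_eq_sq_mul_of_pdy h.contDiff hus h.eventually_axis hpdy
  have hKA : ∀ᶠ s in 𝓝 (0 : ℝ), K (0, s) = A (0, s) := by
    refine eventually_eq_of_eventually_mul_eq (c := (· ^ 2)) (by fun_prop) (by fun_prop)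
      ((dense_compl_singleton (0 : ℝ)).mono fun t ht ↦ pow_ne_zero 2 ht) ?_
    have hline : Tendsto (fun s : ℝ ↦ ((0 : ℝ), s)) (𝓝 0) (𝓝 0) :=
      tendsto_zero_of_contDiff (by fun_prop) (by simp)
    filter_upwards [hline.eventually hA] with s hs
    have hpdy₀ := hpdy.self_of_nhds
    have hn₀ : n 0 = 0 := h.eventually_axis.self_of_nhds
    simpa [hn₀, hpdy₀, hs, eq_comm] using hK 0 s
  refine ⟨u, K, hus, hKs, hu₀, hKA.self_of_nhds.trans hA₀, hpdy.mono fun p hp s ↦ ?_⟩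
  rw [hK, hp]

theorem IsGullNormalForm.exists_sub_eq_sq_mul_sq {n n' : ℝ × ℝ → ℝ} {w w' : ℝ → ℝ}
    (h : IsGullNormalForm n w) (h' : IsGullNormalForm n' w') (hww' : w =ᶠ[𝓝 0] w') :
    ∃ ρ : ℝ × ℝ → ℝ, ContDiff ℝ ∞ ρ ∧
      ∀ᶠ p in 𝓝 0, n' p - n p = (p.2 * (p.1 + 2 * p.2 ^ 2)) ^ 2 * ρ p := by
  obtain ⟨u, hus, -, hu⟩ := h.exists_pdy_eq
  obtain ⟨u', hus', -, hu'⟩ := h'.exists_pdy_eq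
  have hpdy_sub (p : ℝ × ℝ) : pdy (fun q ↦ n' q - n q) p = pdy n' p - pdy n p :=
    pdy_eq_of_hasDerivAt ((h'.contDiff.sub h.contDiff).differentiable (by simp) _)
      ((hasDerivAt_pdy (h'.contDiff.differentiable (by simp) p)).sub
        (hasDerivAt_pdy (h.contDiff.differentiable (by simp) p)))
  have hsq : Tendsto (fun t : ℝ ↦ t ^ 2) (𝓝 0) (𝓝 0) :=
    tendsto_zero_of_contDiff (by fun_prop) (by simp)
  refine exists_eq_sq_mul_sq_of_pdy (h'.contDiff.sub h.contDiff) (hus'.sub hus) ?_ ?_ ?_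
  · filter_upwards [h.eventually_axis, h'.eventually_axis] with x hx hx'
    rw [hx, hx', sub_zero]
  · filter_upwards [hu, hu'] with p hp hp'
    rw [hpdy_sub, hp, hp']
    ring
  · filter_upwards [h.eventually_branch, h'.eventually_branch, hsq.eventually hww'] with t ht ht' hw
    rw [ht, ht', hw, sub_self]

theorem AEquiv.of_isGullNormalForm {n n' : ℝ × ℝ → ℝ} {w w' : ℝ → ℝ} (h : IsGullNormalForm n w)
    (h' : IsGullNormalForm n' w') (hww' : w =ᶠ[𝓝 0] w') :
    AEquiv (prenormal n) (prenormal n') := by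
  obtain ⟨u, K, hus, hKs, hu₀, hK₀, hK⟩ := h.exists_expansion
  obtain ⟨ρ, hρs, hρ⟩ := h.exists_sub_eq_sq_mul_sq h' hww'
  obtain ⟨θ, hθs, -, hθ⟩ := exists_contDiff_implicit (Φ := fun q : (ℝ × ℝ) × ℝ ↦
      q.2 * u q.1 + q.2 ^ 2 * K (q.1, q.1.2 * (q.1.1 + 2 * q.1.2 ^ 2) * q.2) - ρ q.1)
    (by fun_prop) (a := 0) (θ₀ := ρ 0 / 2) (d := 2) (by simp [hu₀, hK₀, ← Prod.zero_eq_mk])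
    (by simpa [hu₀, hK₀, ← Prod.zero_eq_mk] using
      ((hasDerivAt_id (ρ 0 / 2)).mul_const 2).sub_const (ρ 0)) two_ne_zero
  have hν : ContDiff ℝ ∞ fun p : ℝ × ℝ ↦ p.2 * (1 + (p.1 + 2 * p.2 ^ 2) * θ p) := by fun_prop
  have hν' : pdy (fun p : ℝ × ℝ ↦ p.2 * (1 + (p.1 + 2 * p.2 ^ 2) * θ p)) 0 = 1 := by
    have hθ' : DifferentiableAt ℝ (fun s : ℝ ↦ 1 + (0 + 2 * s ^ 2) * θ (0, s)) 0 :=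
      ContDiff.differentiable (n := ∞) (by fun_prop) (by simp) _
    rw [pdy_eq_of_hasDerivAt (hν.differentiable (by simp) 0)
      ((hasDerivAt_id' (0 : ℝ)).fun_mul hθ'.hasDerivAt)]
    simp
  refine .prenormal_of_fiberwise (ψ := Prod.snd) hν contDiff_snd (by simp) rfl
    (by simp [hν']) (by simp [pdy, dop, fderiv_snd]) ?_
  filter_upwards [hK, hρ, hθ] with p hK hρ hθ
  have := hK (p.2 * (p.1 + 2 * p.2 ^ 2) * θ p)
  rw [mul_one_add, ← mul_assoc, this]
  linear_combination (p.2 * (p.1 + 2 * p.2 ^ 2)) ^ 2 * hθ - hρ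

theorem jacDet_fiberwise_mul {α δ : ℝ → ℝ} (hα : ContDiff ℝ ∞ α) (hδ : ContDiff ℝ ∞ δ) :
    jacDet (fun p ↦ (α p.1 * p.1, δ p.1 * p.2)) 0 = α 0 * δ 0 := by
  have hA : DifferentiableAt ℝ (fun p : ℝ × ℝ ↦ α p.1 * p.1) 0 :=
    ContDiff.differentiable (n := ∞) (by fun_prop) (by simp) _
  have hB : DifferentiableAt ℝ (fun p : ℝ × ℝ ↦ δ p.1 * p.2) 0 :=
    ContDiff.differentiable (n := ∞) (by fun_prop) (by simp) _
  have hpdxA := (hasDerivAt_pdx hA).unique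
    ((hα.differentiable (by simp) 0).hasDerivAt.fun_mul (hasDerivAt_id' (0 : ℝ)))
  rw [jacDet_prodMk hA hB, hpdxA, pdy_eq_of_hasDerivAt hA (hasDerivAt_const _ (α 0 * 0)),
    pdy_eq_of_hasDerivAt hB ((hasDerivAt_id' (0 : ℝ)).const_mul (δ 0))]
  simp

theorem AEquiv.prenormal_rescale {b ζ : ℝ → ℝ} (hb : ContDiff ℝ ∞ b)
    (hζb : ∀ᶠ x in 𝓝 0, ζ x * b x = 1) (n : ℝ × ℝ → ℝ) :
    AEquiv (prenormal fun p ↦ ζ p.1 ^ 4 * n (b p.1 ^ 2 * p.1, b p.1 * p.2)) (prenormal n) := by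
  have hb₀ : b 0 ≠ 0 := right_ne_zero_of_mul_eq_one hζb.self_of_nhds
  refine .of_intertwine (φ := fun p ↦ (b p.1 ^ 2 * p.1, b p.1 * p.2))
    (ψ := fun p ↦ (b p.1 ^ 2 * p.1, b p.1 ^ 4 * p.2)) (by fun_prop) (by fun_prop) (by simp)
    (by simp) ?_ ?_ ?_
  · exact (jacDet_fiberwise_mul (hb.pow 2) hb).trans_ne (by simp [hb₀])
  · exact (jacDet_fiberwise_mul (hb.pow 2) (hb.pow 4)).trans_ne (by simp [hb₀])
  · filter_upwards [(continuous_fst.tendsto (0 : ℝ × ℝ)).eventually hζb] with p hp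
    refine Prod.ext rfl ?_
    simp only [prenormal]
    rw [← mul_assoc, ← mul_pow, mul_comm (b _), hp, one_pow, one_mul]

theorem IsGullNormalForm.rescale {n : ℝ × ℝ → ℝ} {w b ζ : ℝ → ℝ} (h : IsGullNormalForm n w)
    (hb : ContDiff ℝ ∞ b) (hζ : ContDiff ℝ ∞ ζ) (hζb : ∀ᶠ x in 𝓝 0, ζ x * b x = 1) :
    IsGullNormalForm (fun p ↦ ζ p.1 ^ 4 * n (b p.1 ^ 2 * p.1, b p.1 * p.2))
      (fun s ↦ b (-2 * s) * w (b (-2 * s) ^ 2 * s)) := by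
  have hns := h.contDiff
  have hws := h.contDiff_odd
  obtain ⟨u, hus, hu₀, hpdy⟩ := h.exists_pdy_eq
  refine ⟨by fun_prop, by fun_prop, ?_, ?_, ?_⟩
  · have hscale : Tendsto (fun x ↦ b x ^ 2 * x) (𝓝 0) (𝓝 0) :=
      tendsto_zero_of_contDiff (by fun_prop) (by simp)
    filter_upwards [hscale.eventually h.eventually_axis] with x hx
    rw [mul_zero, hx, mul_zero]
  · have hscale : Tendsto (fun p : ℝ × ℝ ↦ (b p.1 ^ 2 * p.1, b p.1 * p.2)) (𝓝 0) (𝓝 0) :=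
      tendsto_zero_of_contDiff (by fun_prop) (by simp)
    refine ⟨fun p ↦ (ζ p.1 * b p.1) ^ 4 * u (b p.1 ^ 2 * p.1, b p.1 * p.2), by fun_prop,
      by simp [hζb.self_of_nhds, hu₀, Prod.mk_zero_zero], ?_⟩
    filter_upwards [hscale.eventually hpdy] with p hp
    rw [pdy_eq_of_hasDerivAt (ContDiff.differentiable (n := ∞) (by fun_prop) (by simp) _)
      ((hasDerivAt_comp_prodMk (a := fun _ ↦ b p.1 ^ 2 * p.1) (b := fun s ↦ b p.1 * s)
        (hns.differentiable (by simp) _) (hasDerivAt_const p.2 _)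
        ((hasDerivAt_id' p.2).const_mul (b p.1))).const_mul (ζ p.1 ^ 4)), hp]
    ring
  · have hsq : Tendsto (fun t : ℝ ↦ -2 * t ^ 2) (𝓝 0) (𝓝 0) :=
      tendsto_zero_of_contDiff (by fun_prop) (by simp)
    have hscale : Tendsto (fun t : ℝ ↦ b (-2 * t ^ 2) * t) (𝓝 0) (𝓝 0) :=
      tendsto_zero_of_contDiff (by fun_prop) (by simp)
    filter_upwards [hsq.eventually hζb, hscale.eventually h.eventually_branch] with t hζb ht
    rw [show b (-2 * t ^ 2) ^ 2 * (-2 * t ^ 2) = -2 * (b (-2 * t ^ 2) * t) ^ 2 by ring, ht,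
      mul_pow _ t 2]
    calc
      _ = -(ζ (-2 * t ^ 2) * b (-2 * t ^ 2)) ^ 4 * t ^ 4 *
          (1 + t * (b (-2 * t ^ 2) * w (b (-2 * t ^ 2) ^ 2 * t ^ 2))) := by ring
      _ = _ := by rw [hζb]; ring

theorem exists_pow_two_mul_add_one_eq (c : ℝ) (j : ℕ) : ∃ b : ℝ, b ^ (2 * j + 1) = c := by
  have hne : 2 * j + 1 ≠ 0 := by omega
  rcases le_total 0 c with hc | hc
  · exact ⟨_, Real.rpow_inv_natCast_pow hc hne⟩
  · refine ⟨-((-c) ^ ((2 * j + 1 : ℕ) : ℝ)⁻¹), ?_⟩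
    rw [Odd.neg_pow ⟨j, rfl⟩, Real.rpow_inv_natCast_pow (by linarith) hne, neg_neg]

theorem exists_scale_eq {U U' : ℝ → ℝ} (hU : ContDiff ℝ ∞ U) (hU' : ContDiff ℝ ∞ U')
    (hU₀ : U 0 ≠ 0) (hU'₀ : U' 0 ≠ 0) (j : ℕ) :
    ∃ β : ℝ → ℝ, ContDiff ℝ ∞ β ∧ β 0 ≠ 0 ∧
      ∀ᶠ s in 𝓝 0, β s ^ (2 * j + 1) * U' (β s ^ 2 * s) = U s := by
  obtain ⟨β₀, hβ₀⟩ := exists_pow_two_mul_add_one_eq (U 0 / U' 0) j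
  have hβ₀_ne : β₀ ≠ 0 := by
    rintro rfl
    exact div_ne_zero hU₀ hU'₀ (by simpa using hβ₀.symm)
  have hderiv : HasDerivAt (fun b : ℝ ↦ b ^ (2 * j + 1) * U' (b ^ 2 * 0) - U 0)
      ((2 * j + 1 : ℕ) * β₀ ^ (2 * j) * U' 0) β₀ := by
    simp only [mul_zero]
    exact ((hasDerivAt_pow (2 * j + 1) β₀).mul_const (U' 0)).sub_const (U 0)
  obtain ⟨β, hβs, hβ, hβe⟩ := exists_contDiff_implicit
    (Φ := fun p : ℝ × ℝ ↦ p.2 ^ (2 * j + 1) * U' (p.2 ^ 2 * p.1) - U p.1) (by fun_prop)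
    (by simp [hβ₀, hU'₀]) hderiv
    (mul_ne_zero (mul_ne_zero (by positivity) (pow_ne_zero _ hβ₀_ne)) hU'₀)
  exact ⟨β, hβs, hβ ▸ hβ₀_ne, hβe.mono fun s ↦ sub_eq_zero.1⟩

theorem AEquiv.of_isGullNormalForm_pow_mul {n n' : ℝ × ℝ → ℝ} {U U' : ℝ → ℝ} {j : ℕ}
    (h : IsGullNormalForm n fun s ↦ s ^ j * U s) (h' : IsGullNormalForm n' fun s ↦ s ^ j * U' s)
    (hU : ContDiff ℝ ∞ U) (hU' : ContDiff ℝ ∞ U') (hU₀ : U 0 ≠ 0) (hU'₀ : U' 0 ≠ 0) :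
    AEquiv (prenormal n) (prenormal n') := by
  obtain ⟨β, hβs, hβ₀, hβ⟩ := exists_scale_eq hU hU' hU₀ hU'₀ j
  obtain ⟨ζ, hζs, -, hζ⟩ := exists_contDiff_implicit
    (Φ := fun p : ℝ × ℝ ↦ p.2 * β (-p.1 / 2) - 1) (by fun_prop) (a := 0) (θ₀ := (β 0)⁻¹)
    (d := β 0) (by simp [hβ₀])
    (by simpa using ((hasDerivAt_id (β 0)⁻¹).mul_const (β 0)).sub_const 1) hβ₀
  have hζβ : ∀ᶠ x in 𝓝 0, ζ x * β (-x / 2) = 1 := hζ.mono fun x ↦ sub_eq_zero.1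
  refine (of_isGullNormalForm h (h'.rescale (b := fun x ↦ β (-x / 2)) (by fun_prop) hζs hζβ)
    (hβ.mono fun s hs ↦ ?_)).trans (prenormal_rescale (by fun_prop) hζβ n')
  simp only [show -(-2 * s) / 2 = s by ring, ← hs]
  ring

end Uniqueness

section Invariance

theorem HasOddBranchTerm.isLittleO_comp_prenormal {g ψ : ℝ × ℝ → ℝ} {j : ℕ} {I : ℝ}
    (h : HasOddBranchTerm g j I) (hg : ContDiff ℝ ∞ g) (hg₀ : g 0 = 0) (hψ : ContDiff ℝ ∞ ψ) :
    (fun t ↦ ψ (prenormal g (-2 * t ^ 2, t)) - ψ (prenormal g (-2 * t ^ 2, -t)) -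
      2 * (pdy ψ 0 * I) * t ^ (2 * j + 5)) =o[𝓝 0] fun t ↦ t ^ (2 * j + 5) := by
  set m := 2 * j + 5
  have hbranch (σ : ℝ) : Tendsto (fun t ↦ prenormal g (-2 * t ^ 2, σ * t)) (𝓝 0) (𝓝 0) := by
    have := contDiff_prenormal hg
    exact tendsto_zero_of_contDiff (by fun_prop) (by simp [prenormal, hg₀, Prod.mk_zero_zero])
  have hpair : Tendsto (fun t ↦ (prenormal g (-2 * t ^ 2, t), prenormal g (-2 * t ^ 2, -t))) (𝓝 0)
      (𝓝 (0, 0)) := by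
    simpa using (hbranch 1).prodMk_nhds (hbranch (-1))
  have hdiff : (fun t ↦ prenormal g (-2 * t ^ 2, t) - prenormal g (-2 * t ^ 2, -t))
      =O[𝓝 0] fun t ↦ t ^ m := by
    have hsnd : (fun t ↦ g (-2 * t ^ 2, t) - g (-2 * t ^ 2, -t)) =O[𝓝 0] fun t ↦ t ^ m :=
      (h.2.isBigO.add ((isBigO_refl (fun t : ℝ ↦ t ^ m) _).const_mul_left (2 * I))).congr_left
        fun t ↦ by ring
    simpa [prenormal] using (isBigO_zero (E' := ℝ) _ _).prod_left hsnd
  have hstrict :=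
    ((hψ.contDiffAt (x := 0)).hasStrictFDerivAt (by simp)).isLittleO.comp_tendsto hpair
  refine ((hstrict.trans_isBigO hdiff).add (h.2.const_mul_left (pdy ψ 0))).congr_left fun t ↦ ?_
  simp only [Function.comp_apply, fderiv_apply_eq_pdx_pdy, prenormal, Prod.mk_sub_mk, sub_self]
  ring

theorem abs_le_abs_add_of_mem_uIcc {a b s : ℝ} (hs : s ∈ Set.uIcc a b) (hab : 0 ≤ a * b) :
    |s| ≤ |a + b| := by
  have hmax : |s| ≤ max |a| |b| := by
    rcases Set.mem_uIcc.1 hs with h | h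
    · exact abs_le_max_abs_abs h.1 h.2
    · rw [max_comm]
      exact abs_le_max_abs_abs h.1 h.2
  rw [(abs_add_eq_add_abs_iff a b).2 (mul_nonneg_iff.1 hab)]
  exact hmax.trans (max_le_add_of_nonneg (abs_nonneg _) (abs_nonneg _))

theorem IsGullNormalForm.exists_abs_sub_branch_le {n : ℝ × ℝ → ℝ} {w : ℝ → ℝ}
    (h : IsGullNormalForm n w) :
    ∃ C, ∀ᶠ p : ℝ × ℝ in 𝓝 0, 0 ≤ p.1 * p.2 →
      |n (-2 * p.1 ^ 2, p.2) - n (-2 * p.1 ^ 2, p.1)| ≤ C * (p.1 ^ 2 - p.2 ^ 2) ^ 2 := by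
  obtain ⟨u, hu, -, hpdy⟩ := h.exists_pdy_eq
  obtain ⟨r, hr, hball⟩ := Metric.eventually_nhds_iff_ball.1
    (hpdy.and (hu.continuous.norm.tendsto 0 |>.eventually (eventually_lt_nhds (lt_add_one _))))
  set C := ‖u 0‖ + 1
  have hnear : Tendsto (fun p : ℝ × ℝ ↦ (-2 * p.1 ^ 2, p.1 + p.2)) (𝓝 0) (𝓝 0) :=
    tendsto_zero_of_contDiff (by fun_prop) (by simp)
  refine ⟨4 * C, ?_⟩
  filter_upwards [hnear.eventually (Metric.ball_mem_nhds 0 hr)] with ⟨a, b⟩ hab hsign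
  have hbound {s : ℝ} (hs : s ∈ Set.uIcc a b) :
      ‖pdy n (-2 * a ^ 2, s)‖ ≤ |a + b| * (2 * (|b - a| * (2 * |a + b|)) * C) := by
    have hs_le := abs_le_abs_add_of_mem_uIcc hs hsign
    have hsum : |s + a| ≤ 2 * |a + b| := by
      have := abs_le_abs_add_of_mem_uIcc Set.left_mem_uIcc hsign
      linarith [abs_add_le s a]
    obtain ⟨hpdy, hu⟩ := hball (-2 * a ^ 2, s) <| mem_ball_zero_iff.2 <|
      (max_le_max_left _ hs_le).trans_lt (mem_ball_zero_iff.1 hab)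
    rw [hpdy, show s * (-2 * a ^ 2 + 2 * s ^ 2) * u (-2 * a ^ 2, s) =
      s * (2 * ((s - a) * (s + a)) * u (-2 * a ^ 2, s)) by ring]
    simp only [norm_mul, Real.norm_eq_abs, abs_two] at hu ⊢
    gcongr ?_ * (2 * (?_ * ?_) * ?_)
    exact Set.abs_sub_left_of_mem_uIcc hs
  have hderiv (s : ℝ) : HasDerivAt (fun s ↦ n (-2 * a ^ 2, s)) (pdy n (-2 * a ^ 2, s)) s :=
    hasDerivAt_pdy (p := (-2 * a ^ 2, s)) (h.contDiff.differentiable (by simp) _)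
  have hmvt := (convex_uIcc a b).norm_image_sub_le_of_norm_hasDerivWithin_le
    (fun s _ ↦ (hderiv s).hasDerivWithinAt) (fun s hs ↦ hbound hs) Set.left_mem_uIcc
    Set.right_mem_uIcc
  refine hmvt.trans_eq ?_
  rw [← sq_abs (a ^ 2 - b ^ 2), sq_sub_sq, abs_mul, Real.norm_eq_abs, abs_sub_comm a b]
  ring

theorem exists_branch_point {A B : ℝ → ℝ} {b : ℝ} (hb : b ≠ 0)
    (hB : Tendsto (fun t ↦ B t / t) (𝓝[≠] 0) (𝓝 b))
    (hA : Tendsto (fun t ↦ A t / t ^ 2) (𝓝[≠] 0) (𝓝 (-2 * b ^ 2))) :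
    ∃ τ : ℝ → ℝ, Tendsto (fun t ↦ τ t / t) (𝓝[≠] 0) (𝓝 b) ∧
      ∀ᶠ t in 𝓝[≠] 0, A t = -2 * τ t ^ 2 ∧ 0 ≤ τ t * B t := by
  set ρ : ℝ → ℝ := fun t ↦ A t / t ^ 2 / (-2 * b ^ 2)
  have hρ : Tendsto ρ (𝓝[≠] 0) (𝓝 1) := by
    have := hA.div_const (-2 * b ^ 2)
    rwa [div_self (mul_ne_zero (by norm_num) (pow_ne_zero 2 hb))] at this
  refine ⟨fun t ↦ t * (b * √(ρ t)), ?_, ?_⟩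
  · refine Tendsto.congr' (f₁ := fun t ↦ b * √(ρ t)) ?_ (by simpa using hρ.sqrt.const_mul b)
    filter_upwards [self_mem_nhdsWithin] with t ht
    rw [mul_div_cancel_left₀ _ ht]
  · have hsign : ∀ᶠ t in 𝓝[≠] 0, 0 < b * (B t / t) :=
      (hB.const_mul b).eventually (eventually_gt_nhds (mul_self_pos.2 hb))
    filter_upwards [self_mem_nhdsWithin, hρ.eventually (eventually_gt_nhds one_pos), hsign]
      with t (ht : t ≠ 0) hρt hsign
    constructor
    · rw [mul_pow, mul_pow, Real.sq_sqrt hρt.le]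
      simp only [ρ]
      field_simp
    · have : t * (b * √(ρ t)) * B t = t ^ 2 * √(ρ t) * (b * (B t / t)) := by field_simp
      rw [this]
      positivity

theorem tendsto_zero_of_tendsto_div {τ : ℝ → ℝ} {b : ℝ}
    (hτ : Tendsto (fun t ↦ τ t / t) (𝓝[≠] 0) (𝓝 b)) : Tendsto τ (𝓝[≠] 0) (𝓝 0) := by
  have hid : Tendsto (fun t : ℝ ↦ t) (𝓝[≠] 0) (𝓝 0) :=
    tendsto_nhdsWithin_of_tendsto_nhds tendsto_id
  refine (zero_mul b ▸ hid.mul hτ).congr' ?_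
  filter_upwards [self_mem_nhdsWithin] with t ht using mul_div_cancel₀ _ ht

theorem isLittleO_pow_mul_sub_of_tendsto {τ V : ℝ → ℝ} {b v : ℝ} (m : ℕ)
    (hτ : Tendsto (fun t ↦ τ t / t) (𝓝[≠] 0) (𝓝 b)) (hV : Tendsto V (𝓝[≠] 0) (𝓝 v)) :
    (fun t ↦ τ t ^ m * V t - b ^ m * v * t ^ m) =o[𝓝[≠] 0] fun t ↦ t ^ m := by
  have hlim := ((hτ.pow m).mul hV).sub_const (b ^ m * v)
  rw [sub_self] at hlim
  refine (isLittleO_iff_tendsto' ?_).2 (hlim.congr' ?_) <;>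
    filter_upwards [self_mem_nhdsWithin] with t ht
  · exact fun h ↦ absurd h (pow_ne_zero m ht)
  · have := pow_ne_zero m ht
    rw [div_pow]
    field_simp

theorem IsGullNormalForm.isLittleO_along_curve {n : ℝ × ℝ → ℝ} {U : ℝ → ℝ} {j : ℕ}
    (h : IsGullNormalForm n fun s ↦ s ^ j * U s) (hU : ContinuousAt U 0) {A B : ℝ → ℝ} {b : ℝ}
    (hb : b ≠ 0) (hB : Tendsto (fun t ↦ B t / t) (𝓝[≠] 0) (𝓝 b))
    (hAB : (fun t ↦ A t + 2 * B t ^ 2) =O[𝓝[≠] 0] fun t ↦ t ^ (j + 3)) :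
    (fun t ↦ n (A t, B t) + A t ^ 2 / 4 + b ^ (2 * j + 5) * U 0 * t ^ (2 * j + 5))
      =o[𝓝[≠] 0] fun t ↦ t ^ (2 * j + 5) := by
  have hA : Tendsto (fun t ↦ A t / t ^ 2) (𝓝[≠] 0) (𝓝 (-2 * b ^ 2)) := by
    have hsmall : Tendsto (fun t ↦ (A t + 2 * B t ^ 2) / t ^ 2) (𝓝[≠] 0) (𝓝 0) :=
      (hAB.trans_isLittleO ((isLittleO_pow_pow (by omega)).mono
        nhdsWithin_le_nhds)).tendsto_div_nhds_zero
    have := hsmall.sub ((hB.pow 2).const_mul 2)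
    rw [zero_sub, ← neg_mul] at this
    exact this.congr fun t ↦ by ring
  obtain ⟨τ, hτ, hbranch⟩ := exists_branch_point hb hB hA
  have hτ₀ := tendsto_zero_of_tendsto_div hτ
  obtain ⟨C, hC⟩ := h.exists_abs_sub_branch_le
  have hoff : (fun t ↦ n (A t, B t) - n (A t, τ t)) =o[𝓝[≠] 0] fun t ↦ t ^ (2 * j + 5) := by
    have hsq : (fun t : ℝ ↦ (t ^ (j + 3)) ^ 2) =o[𝓝[≠] 0] fun t ↦ t ^ (2 * j + 5) := by
      simp only [← pow_mul]
      exact (isLittleO_pow_pow (by omega)).mono nhdsWithin_le_nhds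
    refine IsBigO.trans_isLittleO (.of_bound (C / 4) ?_) ((hAB.pow 2).trans_isLittleO hsq)
    filter_upwards [hbranch,
      (hτ₀.prodMk_nhds (tendsto_zero_of_tendsto_div hB)).eventually hC] with t ht hC
    rw [ht.1, Real.norm_of_nonneg (sq_nonneg _)]
    refine (hC ht.2).trans_eq ?_
    ring
  have hon : (fun t ↦ τ t ^ (2 * j + 5) * U (τ t ^ 2) - b ^ (2 * j + 5) * U 0 * t ^ (2 * j + 5))
      =o[𝓝[≠] 0] fun t ↦ t ^ (2 * j + 5) := by
    refine isLittleO_pow_mul_sub_of_tendsto _ hτ (hU.tendsto.comp ?_)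
    simpa using hτ₀.pow 2
  refine (hoff.sub hon).congr' ?_ .rfl
  filter_upwards [hbranch, hτ₀.eventually h.eventually_branch] with t ht hn
  rw [ht.1, hn]
  ring

theorem IsGullNormalForm.isBigO_add_two_mul_sq {n : ℝ × ℝ → ℝ} {w A B : ℝ → ℝ} {b : ℝ} {j : ℕ}
    (h : IsGullNormalForm n w) (hb : b ≠ 0) (hA : Tendsto A (𝓝[≠] 0) (𝓝 0))
    (hB : Tendsto (fun t ↦ B t / t) (𝓝[≠] 0) (𝓝 b))
    (hpdy : (fun t ↦ pdy n (A t, B t)) =O[𝓝[≠] 0] fun t ↦ t ^ (j + 4)) :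
    (fun t ↦ A t + 2 * B t ^ 2) =O[𝓝[≠] 0] fun t ↦ t ^ (j + 3) := by
  obtain ⟨u, hu, hu₀, hn⟩ := h.exists_pdy_eq
  have hAB := hA.prodMk_nhds (tendsto_zero_of_tendsto_div hB)
  have hunit : Tendsto (fun t ↦ B t / t * u (A t, B t)) (𝓝[≠] 0) (𝓝 (b * 2)) :=
    hB.mul (hu₀ ▸ (hu.continuous.tendsto 0).comp hAB)
  have hb₂ : b * 2 ≠ 0 := mul_ne_zero hb two_ne_zero
  have hquot : (fun t ↦ pdy n (A t, B t) * t⁻¹) =O[𝓝[≠] 0] fun t ↦ t ^ (j + 4) * t⁻¹ :=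
    hpdy.mul (isBigO_refl _ _)
  refine ((hquot.mul ((hunit.inv₀ hb₂).isBigO_one ℝ)).congr' ?_ ?_)
  · filter_upwards [self_mem_nhdsWithin, hAB.eventually hn, hunit.eventually_ne hb₂]
      with t _ hn hne
    rw [hn, ← div_eq_mul_inv, ← div_eq_mul_inv, div_eq_iff hne]
    ring
  · filter_upwards [self_mem_nhdsWithin] with t (ht : t ≠ 0)
    field_simp
    ring

theorem AEquiv.exists_intertwine {f g : ℝ × ℝ → ℝ × ℝ} (h : AEquiv f g) :
    ∃ χ ψ : ℝ × ℝ → ℝ × ℝ, ContDiff ℝ ∞ χ ∧ ContDiff ℝ ∞ ψ ∧ χ 0 = 0 ∧ ψ 0 = 0 ∧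
      jacDet χ 0 ≠ 0 ∧ jacDet ψ 0 ≠ 0 ∧ ∀ᶠ q in 𝓝 0, ψ (f q) = g (χ q) := by
  obtain ⟨φ, ψ, hφ, hψ, hφ₀, hψ₀, hdφ, hdψ, h⟩ := h
  obtain ⟨χ, hχ, hright, hleft⟩ := exists_contDiff_local_inverse hφ hdφ
  have hdχ := (bijective_fderiv_of_eventually_leftInverse (hφ.differentiable (by simp) _)
    (hχ.differentiable (by simp) _) hleft).2
  have hχ₀ := hleft.self_of_nhds
  rw [hφ₀] at hright hdχ hχ₀
  refine ⟨χ, ψ, hχ, hψ, hχ₀, hψ₀, bijective_fderiv_iff_jacDet_ne_zero.1 hdχ,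
    bijective_fderiv_iff_jacDet_ne_zero.1 hdψ, ?_⟩
  filter_upwards [(tendsto_zero_of_contDiff hχ hχ₀).eventually h, hright] with q hq hq'
  rw [← hq, hq']

theorem dop_congr {g h : ℝ × ℝ → ℝ} {p : ℝ × ℝ} (v : ℝ × ℝ) (hgh : g =ᶠ[𝓝 p] h) :
    dop v g p = dop v h p := by
  rw [dop, dop, hgh.fderiv_eq]

theorem dop_comp_prodMk {n a c : ℝ × ℝ → ℝ} {p : ℝ × ℝ} (v : ℝ × ℝ)
    (hn : DifferentiableAt ℝ n (a p, c p)) (ha : DifferentiableAt ℝ a p)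
    (hc : DifferentiableAt ℝ c p) :
    dop v (fun q ↦ n (a q, c q)) p =
      dop v a p * pdx n (a p, c p) + dop v c p * pdy n (a p, c p) := by
  have hcomp : HasFDerivAt (fun q ↦ n (a q, c q))
      ((fderiv ℝ n (a p, c p)).comp ((fderiv ℝ a p).prod (fderiv ℝ c p))) p :=
    hn.hasFDerivAt.comp p (ha.hasFDerivAt.prodMk hc.hasFDerivAt)
  rw [dop, hcomp.fderiv]
  exact fderiv_apply_eq_pdx_pdy _ _ _

theorem dop_eq_of_intertwine {g n : ℝ × ℝ → ℝ} {χ ψ : ℝ × ℝ → ℝ × ℝ} (hg : ContDiff ℝ ∞ g)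
    (hn : ContDiff ℝ ∞ n) (hχ : ContDiff ℝ ∞ χ) (hψ : ContDiff ℝ ∞ ψ)
    (h : ∀ᶠ q in 𝓝 0, ψ (prenormal g q) = prenormal n (χ q)) (v : ℝ × ℝ) :
    ∀ᶠ q in 𝓝 0,
      v.1 * pdx (fun p ↦ (ψ p).1) (q.1, g q) + dop v g q * pdy (fun p ↦ (ψ p).1) (q.1, g q) =
        dop v (fun p ↦ (χ p).1) q ∧
      v.1 * pdx (fun p ↦ (ψ p).2) (q.1, g q) + dop v g q * pdy (fun p ↦ (ψ p).2) (q.1, g q) =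
        dop v (fun p ↦ (χ p).1) q * pdx n (χ q) + dop v (fun p ↦ (χ p).2) q * pdy n (χ q) := by
  have hfst (q : ℝ × ℝ) : dop v Prod.fst q = v.1 := by simp [dop, fderiv_fst]
  have hdop {θ : ℝ × ℝ → ℝ} (hθ : ContDiff ℝ ∞ θ) (q : ℝ × ℝ) :
      dop v (fun p ↦ θ (p.1, g p)) q = v.1 * pdx θ (q.1, g q) + dop v g q * pdy θ (q.1, g q) := by
    rw [dop_comp_prodMk v (hθ.differentiable (by simp) _) differentiableAt_fst
      (hg.differentiable (by simp) _), hfst]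
  filter_upwards [h.eventually_nhds] with q hq
  have hq₁ : (fun p ↦ (ψ (p.1, g p)).1) =ᶠ[𝓝 q] fun p ↦ (χ p).1 :=
    hq.mono fun p hp ↦ (congrArg Prod.fst hp :)
  have hq₂ : (fun p ↦ (ψ (p.1, g p)).2) =ᶠ[𝓝 q] fun p ↦ n ((χ p).1, (χ p).2) :=
    hq.mono fun p hp ↦ (congrArg Prod.snd hp :)
  rw [← hdop hψ.fst, ← hdop hψ.snd, dop_congr v hq₁, dop_congr v hq₂]
  exact ⟨rfl, dop_comp_prodMk v (hn.differentiable (by simp) _) (hχ.fst.differentiable (by simp) _)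
    (hχ.snd.differentiable (by simp) _)⟩

theorem pdy_ne_zero_of_intertwine {g n : ℝ × ℝ → ℝ} {χ ψ : ℝ × ℝ → ℝ × ℝ} (hg : ContDiff ℝ ∞ g)
    (hn : ContDiff ℝ ∞ n) (hχ : ContDiff ℝ ∞ χ) (hψ : ContDiff ℝ ∞ ψ) (hg₀ : g 0 = 0)
    (hχ₀ : χ 0 = 0) (hdχ : jacDet χ 0 ≠ 0) (hdψ : jacDet ψ 0 ≠ 0)
    (h : ∀ᶠ q in 𝓝 0, ψ (prenormal g q) = prenormal n (χ q)) (hdg : pdy g 0 = 0)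
    (hdn : pdx n 0 = 0 ∧ pdy n 0 = 0) :
    pdy (fun p ↦ (χ p).2) 0 ≠ 0 ∧ pdy (fun p ↦ (ψ p).2) 0 ≠ 0 := by
  have hχ_det := jacDet_prodMk (hχ.fst.differentiable (by simp) 0)
    (hχ.snd.differentiable (by simp) 0)
  have hψ_det := jacDet_prodMk (hψ.fst.differentiable (by simp) 0)
    (hψ.snd.differentiable (by simp) 0)
  have hx := (dop_eq_of_intertwine hg hn hχ hψ h (1, 0)).self_of_nhds.2
  have hy := (dop_eq_of_intertwine hg hn hχ hψ h (0, 1)).self_of_nhds.1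
  rw [show dop (0, 1) g = pdy g from rfl, hdg] at hy
  rw [hχ₀, hdn.1, hdn.2] at hx
  simp only [Prod.fst_zero, hg₀, Prod.mk_zero_zero, one_mul, zero_mul, mul_zero, add_zero] at hx hy
  constructor
  · intro h₀
    exact hdχ (hχ_det.trans (by rw [h₀, ← show _ = pdy (fun p ↦ (χ p).1) 0 from hy]; ring))
  · intro h₀
    rw [h₀, mul_zero, add_zero] at hx
    exact hdψ (hψ_det.trans (by rw [h₀, hx]; ring))

theorem HasOddBranchTerm.isBigO_pdy_of_intertwine {g n : ℝ × ℝ → ℝ} {χ ψ : ℝ × ℝ → ℝ × ℝ} {j : ℕ}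
    {I : ℝ} (hodd : HasOddBranchTerm g j I) (hg : ContDiff ℝ ∞ g) (hn : ContDiff ℝ ∞ n)
    (hχ : ContDiff ℝ ∞ χ) (hψ : ContDiff ℝ ∞ ψ) (hb : pdy (fun p ↦ (χ p).2) 0 ≠ 0)
    (h : ∀ᶠ q in 𝓝 0, ψ (prenormal g q) = prenormal n (χ q)) :
    (fun t ↦ pdy n (χ (-2 * t ^ 2, t))) =O[𝓝 0] fun t ↦ t ^ (j + 4) := by
  have hpdx := contDiff_pdx hn
  have hψ₁ := contDiff_pdy hψ.fst
  have hψ₂ := contDiff_pdy hψ.snd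
  have hχ₂ := contDiff_pdy hχ.snd
  -- The cofactor of `pdy g` in the derivative of the intertwining relation along `y`.
  set E : ℝ × ℝ → ℝ := fun q ↦ pdy (fun p ↦ (ψ p).2) (q.1, g q) -
    pdy (fun p ↦ (ψ p).1) (q.1, g q) * pdx n (χ q)
  have hE : Tendsto (fun q ↦ E q / pdy (fun p ↦ (χ p).2) q) (𝓝 0)
      (𝓝 (E 0 / pdy (fun p ↦ (χ p).2) 0)) :=
    Tendsto.div (Continuous.tendsto (ContDiff.continuous (𝕜 := ℝ) (n := ∞) (by fun_prop)) 0)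
      (hχ₂.continuous.tendsto 0) hb
  refine ((hodd.1.mul ((hE.comp tendsto_branch).isBigO_one ℝ))).congr' ?_ (by simp)
  filter_upwards [tendsto_branch.eventually (dop_eq_of_intertwine hg hn hχ hψ h (0, 1)),
    tendsto_branch.eventually (hχ₂.continuous.continuousAt.eventually_ne hb)] with t ht hne
  simp only [zero_mul, zero_add, ← show pdy = dop (0, 1) from rfl] at ht
  simp only [E, Function.comp_apply] at hne ⊢
  rw [← mul_div_assoc, div_eq_iff hne]
  linear_combination ht.2 - pdx n (χ (-2 * t ^ 2, t)) * ht.1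

theorem IsGullNormalForm.pdx_zero_and_pdy_zero {n : ℝ × ℝ → ℝ} {w : ℝ → ℝ}
    (h : IsGullNormalForm n w) : pdx n 0 = 0 ∧ pdy n 0 = 0 := by
  constructor
  · have haxis : (fun x ↦ n (x, 0)) =ᶠ[𝓝 0] fun _ ↦ 0 := h.eventually_axis
    exact (hasDerivAt_pdx (h.contDiff.differentiable (by simp) 0)).unique
      ((hasDerivAt_const 0 0).congr_of_eventuallyEq haxis)
  · obtain ⟨u, -, -, hpdy⟩ := h.exists_pdy_eq
    simpa using hpdy.self_of_nhds

theorem tendsto_comp_branch_div {c : ℝ × ℝ → ℝ} (hc : ContDiff ℝ ∞ c) (hc₀ : c 0 = 0) :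
    Tendsto (fun t ↦ c (-2 * t ^ 2, t) / t) (𝓝[≠] 0) (𝓝 (pdy c 0)) := by
  have hderiv : HasDerivAt (fun t ↦ c (-2 * t ^ 2, t)) (pdy c 0) 0 := by
    simpa [Prod.mk_zero_zero] using hasDerivAt_comp_prodMk (hc.differentiable (by simp) _)
      ((hasDerivAt_pow 2 (0 : ℝ)).const_mul (-2)) (hasDerivAt_id' (0 : ℝ))
  simpa [slope_fun_def_field, hc₀, Prod.mk_zero_zero] using hderiv.tendsto_slope

theorem pdy_add_sq_div_four {p q : ℝ × ℝ → ℝ} (hq : ContDiff ℝ ∞ q) (hp : ContDiff ℝ ∞ p)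
    (hp₀ : p 0 = 0) : pdy (fun z ↦ q z + p z ^ 2 / 4) 0 = pdy q 0 := by
  refine pdy_eq_of_hasDerivAt (ContDiff.differentiable (n := ∞) (by fun_prop) (by simp) _) ?_
  have hq' := hasDerivAt_pdy (hq.differentiable (by simp) 0)
  have hp' := ((hasDerivAt_pdy (hp.differentiable (by simp) 0)).pow 2).div_const 4
  simpa [hp₀, Prod.mk_zero_zero] using hq'.fun_add hp'

theorem HasOddBranchTerm.exists_curve {g n : ℝ × ℝ → ℝ} {w : ℝ → ℝ} {j : ℕ} {I : ℝ}
    (hodd : HasOddBranchTerm g j I) (hg : ContDiff ℝ ∞ g) (hg₀ : g 0 = 0)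
    (hn : IsGullNormalForm n w) (h : AEquiv (prenormal g) (prenormal n)) :
    ∃ (A B : ℝ → ℝ) (b d : ℝ), b ≠ 0 ∧ d ≠ 0 ∧ Tendsto (fun t ↦ B t / t) (𝓝[≠] 0) (𝓝 b) ∧
      (fun t ↦ A t + 2 * B t ^ 2) =O[𝓝[≠] 0] (fun t ↦ t ^ (j + 3)) ∧
      (fun t ↦ n (A t, B t) + A t ^ 2 / 4 - (n (A (-t), B (-t)) + A (-t) ^ 2 / 4) -
        2 * (d * I) * t ^ (2 * j + 5)) =o[𝓝 0] fun t ↦ t ^ (2 * j + 5) := by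
  obtain ⟨χ, ψ, hχ, hψ, hχ₀, hψ₀, hdχ, hdψ, hint⟩ := h.exists_intertwine
  have hdg : pdy g 0 = 0 := by simpa [Prod.mk_zero_zero] using hodd.1.eq_zero_imp.self_of_nhds
  obtain ⟨hb, hd⟩ := pdy_ne_zero_of_intertwine hg hn.contDiff hχ hψ hg₀ hχ₀ hdχ hdψ hint hdg
    hn.pdx_zero_and_pdy_zero
  have hχγ : Tendsto (fun t ↦ χ (-2 * t ^ 2, t)) (𝓝 0) (𝓝 0) :=
    (tendsto_zero_of_contDiff hχ hχ₀).comp tendsto_branch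
  have hB := tendsto_comp_branch_div hχ.snd (by simp [hχ₀])
  refine ⟨fun t ↦ (χ (-2 * t ^ 2, t)).1, fun t ↦ (χ (-2 * t ^ 2, t)).2, _, _, hb, hd, hB, ?_, ?_⟩
  · exact hn.isBigO_add_two_mul_sq hb (hχγ.fst_nhds.mono_left nhdsWithin_le_nhds) hB
      ((hodd.isBigO_pdy_of_intertwine hg hn.contDiff hχ hψ hb hint).mono nhdsWithin_le_nhds)
  -- Adding `x² / 4` cancels the even part of `n` on the branch, and is done in the target.
  have htarget := hodd.isLittleO_comp_prenormal hg hg₀ (ψ := fun p ↦ (ψ p).2 + (ψ p).1 ^ 2 / 4)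
    (by fun_prop)
  rw [pdy_add_sq_div_four hψ.snd hψ.fst (by simp [hψ₀])] at htarget
  have hneg : Tendsto (fun t : ℝ ↦ -t) (𝓝 0) (𝓝 0) := continuous_neg.tendsto' 0 0 neg_zero
  refine htarget.congr' ?_ .rfl
  filter_upwards [tendsto_branch.eventually hint, (tendsto_branch.comp hneg).eventually hint]
    with t ht hnt
  simp only [Function.comp_apply, neg_sq] at hnt ⊢
  rw [ht, hnt]
  rfl

theorem HasOddBranchTerm.eq_zero_iff_of_aequiv {g n : ℝ × ℝ → ℝ} {U : ℝ → ℝ} {j : ℕ} {I : ℝ}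
    (hodd : HasOddBranchTerm g j I) (hg : ContDiff ℝ ∞ g) (hg₀ : g 0 = 0)
    (hn : IsGullNormalForm n fun s ↦ s ^ j * U s) (hU : ContinuousAt U 0)
    (h : AEquiv (prenormal g) (prenormal n)) : I = 0 ↔ U 0 = 0 := by
  obtain ⟨A, B, b, d, hb, hd, hB, hAB, hdiff⟩ := hodd.exists_curve hg hg₀ hn h
  have hcurve := hn.isLittleO_along_curve hU hb hB hAB
  have hneg : Tendsto (fun t : ℝ ↦ -t) (𝓝[≠] 0) (𝓝[≠] 0) :=
    tendsto_nhdsWithin_of_tendsto_nhds_of_eventually_within _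
      ((continuous_neg.tendsto' 0 0 neg_zero).mono_left nhdsWithin_le_nhds)
      (by filter_upwards [self_mem_nhdsWithin] with t ht using neg_ne_zero.2 ht)
  have hpow (t : ℝ) : (-t) ^ (2 * j + 5) = -t ^ (2 * j + 5) :=
    Odd.neg_pow ⟨j + 2, by ring⟩ t
  have hcurve_neg := hcurve.comp_tendsto hneg
  simp only [Function.comp_def, hpow, isLittleO_neg_right] at hcurve_neg
  have hsum : (fun t ↦ 2 * (d * I + b ^ (2 * j + 5) * U 0) * t ^ (2 * j + 5))
      =o[𝓝[≠] 0] fun t ↦ t ^ (2 * j + 5) := by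
    refine ((hcurve.sub hcurve_neg).sub (hdiff.mono nhdsWithin_le_nhds)).congr_left
      fun t ↦ ?_
    ring
  have hzero : d * I + b ^ (2 * j + 5) * U 0 = 0 := by
    by_contra hne
    refine isLittleO_irrefl ?_
      ((isLittleO_const_mul_left_iff (mul_ne_zero two_ne_zero hne)).1 hsum)
    exact ((eventually_mem_nhdsWithin (a := (0 : ℝ)) (s := {0}ᶜ)).mono
      fun t ht ↦ pow_ne_zero _ ht).frequently
  constructor
  · rintro rfl
    simpa [hb] using hzero
  · intro hU₀
    simpa [hU₀, hd] using hzero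

end Invariance

section Jets

theorem JetEquiv.mono {f g : ℝ × ℝ → ℝ × ℝ} {r s : ℕ} (h : JetEquiv r f g) (hs : s ≤ r) :
    JetEquiv s f g := by
  obtain ⟨φ, ψ, hφ, hψ, hφ₀, hψ₀, hdφ, hdψ, h⟩ := h
  exact ⟨φ, ψ, hφ, hψ, hφ₀, hψ₀, hdφ, hdψ, fun i hi ↦ h i (hi.trans hs)⟩

theorem AEquiv.jetEquiv_of_vanishesToOrder {f : ℝ × ℝ → ℝ × ℝ} {g e : ℝ × ℝ → ℝ} {r : ℕ}
    (hg : ContDiff ℝ ∞ g) (he : ContDiff ℝ ∞ e) (he₀ : VanishesToOrder (r + 1) e)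
    (h : AEquiv f (prenormal (g + e))) : JetEquiv r f (prenormal g) := by
  obtain ⟨φ, ψ, hφ, hψ, hφ₀, hψ₀, hdφ, hdψ, h⟩ := h
  refine ⟨φ, ψ, hφ, hψ, hφ₀, hψ₀, hdφ, hdψ, fun i hi ↦ ?_⟩
  have heq : prenormal (g + e) = prenormal g + fun p ↦ ContinuousLinearMap.inr ℝ ℝ ℝ (e p) := by
    funext p
    simp [prenormal]
  have hes : ContDiff ℝ ∞ fun p ↦ ContinuousLinearMap.inr ℝ ℝ ℝ (e p) := by fun_prop
  rw [(show ψ ∘ f ∘ φ =ᶠ[𝓝 0] _ from h).iteratedFDeriv ℝ i |>.self_of_nhds, heq,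
    iteratedFDeriv_add_apply ((contDiff_prenormal hg).of_le (mod_cast le_top)).contDiffAt
      (hes.of_le (mod_cast le_top)).contDiffAt,
    he₀.clm_comp he (ContinuousLinearMap.inr ℝ ℝ ℝ) i (by omega), add_zero]

theorem exists_aequiv_prenormal_add {g : ℝ × ℝ → ℝ} (hg : ContDiff ℝ ∞ g)
    {e : ℝ × ℝ → ℝ × ℝ} (he : ContDiff ℝ ∞ e) {N : ℕ} (hN : 2 ≤ N) (he₀ : VanishesToOrder N e) :
    ∃ e' : ℝ × ℝ → ℝ, ContDiff ℝ ∞ e' ∧ VanishesToOrder N e' ∧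
      AEquiv (prenormal g + e) (prenormal (g + e')) := by
  have hfst : VanishesToOrder N fun p ↦ (e p).1 := he₀.clm_comp he (.fst ℝ ℝ ℝ)
  have hsnd : VanishesToOrder N fun p ↦ (e p).2 := he₀.clm_comp he (.snd ℝ ℝ ℝ)
  have hfst₀ : (e 0).1 = 0 := vanishesToOrder_one.1 (hfst.mono (by omega))
  have hfsts : ContDiff ℝ ∞ fun p ↦ (e p).1 := by fun_prop
  set χ : ℝ × ℝ → ℝ × ℝ := fun p ↦ (p.1 + (e p).1, p.2)
  have hχ : ContDiff ℝ ∞ χ := by fun_prop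
  have hχ₀ : χ 0 = 0 := by simp [χ, hfst₀]
  have hdχ : jacDet χ 0 ≠ 0 := by
    have hpdx : pdx (fun p ↦ (e p).1) 0 = 0 :=
      vanishesToOrder_one.1 ((hfst.mono hN).fderiv_apply hfsts (1, 0))
    have hpdx_fst : pdx (Prod.fst + fun p ↦ (e p).1) 0 = 1 := by
      rw [pdx_add contDiff_fst hfsts, Pi.add_apply, hpdx]
      simp [pdx, dop, fderiv_fst]
    rw [jacDet_prodMk (ContDiff.differentiable (n := ∞) (by fun_prop) (by simp) _)
      differentiableAt_snd, show pdx (fun p ↦ p.1 + (e p).1) 0 = 1 from hpdx_fst]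
    simp [pdx, pdy, dop, fderiv_snd]
  obtain ⟨θ, hθ, -, hleft⟩ :=
    exists_contDiff_local_inverse hχ (bijective_fderiv_iff_jacDet_ne_zero.2 hdχ)
  have hθ₀ : θ 0 = 0 := by simpa [hχ₀] using hleft.self_of_nhds
  obtain ⟨H, hHs, hH, -⟩ :=
    exists_hadamard (h := fun q : (ℝ × ℝ) × ℝ ↦ g (q.1.1 + q.2, q.1.2)) (by fun_prop)
  refine ⟨fun q ↦ (e (θ q)).2 - (e (θ q)).1 * H (q, -(e (θ q)).1), by fun_prop,
    (hsnd.comp (by fun_prop) hθ hθ₀).sub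
      ((hfst.comp hfsts hθ hθ₀).mul_right (by fun_prop) (by fun_prop)) (by fun_prop)
      (by fun_prop),
    .of_intertwine hχ contDiff_id hχ₀ rfl hdχ (by simp [jacDet]) ?_⟩
  filter_upwards [hleft] with p hp
  have := hH (χ p) (-(e p).1)
  simp only [χ, add_neg_cancel_right, add_zero, smul_eq_mul] at this
  simp only [prenormal, id, Pi.add_apply, hp]
  refine Prod.ext rfl ?_
  simp only [χ, Prod.snd_add]
  linear_combination this

theorem jetEquiv_prenormal_iff {f : ℝ × ℝ → ℝ × ℝ} {g : ℝ × ℝ → ℝ} {r : ℕ} (hr : 1 ≤ r)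
    (hf : ContDiff ℝ ∞ f) (hg : ContDiff ℝ ∞ g) :
    JetEquiv r f (prenormal g) ↔ ∃ e : ℝ × ℝ → ℝ, ContDiff ℝ ∞ e ∧ VanishesToOrder (r + 1) e ∧
      AEquiv f (prenormal (g + e)) := by
  refine ⟨fun h ↦ ?_, fun ⟨e, hes, he, h⟩ ↦ h.jetEquiv_of_vanishesToOrder hg hes he⟩
  obtain ⟨φ, ψ, hφ, hψ, hφ₀, hψ₀, hdφ, hdψ, h⟩ := h
  have hF : ContDiff ℝ ∞ (ψ ∘ f ∘ φ) := hψ.comp (hf.comp hφ)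
  have hgs := contDiff_prenormal hg
  have hvanish : VanishesToOrder (r + 1) (ψ ∘ f ∘ φ - prenormal g) := by
    intro i hi
    rw [iteratedFDeriv_sub_apply (hF.of_le (mod_cast le_top)).contDiffAt
      (hgs.of_le (mod_cast le_top)).contDiffAt, h i (by omega), sub_self]
  obtain ⟨e, hes, he, haequiv⟩ :=
    exists_aequiv_prenormal_add hg (hF.sub hgs) (by omega) hvanish
  refine ⟨e, hes, he, .trans ⟨φ, ψ, hφ, hψ, hφ₀, hψ₀, hdφ, hdψ, ?_⟩ haequiv⟩
  exact .of_forall fun p ↦ by simp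

end Jets

section Core

/-- The polynomial `x * y ^ 2 + y ^ 4`, the common weighted leading part of all gull types. -/
def gullCore : ℝ × ℝ → ℝ := fun p ↦ p.1 * p.2 ^ 2 + p.2 ^ 4

theorem contDiff_gullCore : ContDiff ℝ ∞ gullCore := by unfold gullCore; fun_prop

theorem hasDerivAt_gullCore (x y : ℝ) :
    HasDerivAt (fun y ↦ gullCore (x, y)) (y * (x + 2 * y ^ 2) * 2) y := by
  refine (((hasDerivAt_pow 2 y).const_mul x).add (hasDerivAt_pow 4 y)).congr_deriv ?_
  push_cast
  ring

theorem tcoeff_gullCore (i j : ℕ) : tcoeff gullCore i j = P11 i j := by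
  have : gullCore = (fun p ↦ 1 * (p.1 ^ 1 * p.2 ^ 2)) + fun p ↦ 1 * (p.1 ^ 0 * p.2 ^ 4) := by
    funext p
    simp [gullCore]
  rw [this, tcoeff_add (by fun_prop) (by fun_prop), tcoeff_monomial, tcoeff_monomial, P11]
  grind

theorem isGullType_of_tcoeff {g : ℝ × ℝ → ℝ} (hg : ContDiff ℝ ∞ g)
    (hlow : ∀ i j, i + j < 5 → tcoeff g i j = P11 i j) : IsGullType g where
  contDiff := hg
  tcoeff_of_weight_lt i j hij := by
    rw [hlow i j (by omega), P11, if_neg (by grind)]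
  tcoeff_one_two := by simp [hlow, P11]
  tcoeff_zero_four := by simp [hlow, P11]

theorem isGullType_gullCore_add {h : ℝ × ℝ → ℝ} (hh : ContDiff ℝ ∞ h)
    (hlow : ∀ i j, i + j < 5 → tcoeff h i j = 0) : IsGullType (gullCore + h) :=
  isGullType_of_tcoeff (contDiff_gullCore.add hh) fun i j hij ↦ by
    rw [tcoeff_add contDiff_gullCore hh, tcoeff_gullCore, hlow i j hij, add_zero]

theorem hasOddBranchTerm_gullCore (j : ℕ) : HasOddBranchTerm gullCore j 0 := by
  have hpdy (t : ℝ) : pdy gullCore (-2 * t ^ 2, t) = 0 := by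
    rw [pdy_eq_of_hasDerivAt (contDiff_gullCore.differentiable (by simp) _)
      (hasDerivAt_gullCore _ _)]
    ring
  refine ⟨by simpa only [hpdy] using isBigO_zero _ _, (isLittleO_zero _ _).congr_left fun t ↦ ?_⟩
  simp only [gullCore]
  ring

theorem hasOddBranchTerm_of_tcoeff_eq_zero {h : ℝ × ℝ → ℝ} (hh : ContDiff ℝ ∞ h) {j : ℕ}
    (hlow : ∀ a b, a + b < 2 * j + 5 → tcoeff h a b = 0) :
    HasOddBranchTerm h j (tcoeff h 0 (2 * j + 5)) := by
  have hbranch : branchCoeff (tcoeff h) (2 * j + 5) = tcoeff h 0 (2 * j + 5) := by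
    rw [branchCoeff, Finset.sum_eq_single 0]
    · simp
    · intro i hi hi₀
      have := Finset.mem_range.1 hi
      rw [hlow i _ (by omega), mul_zero]
    · simp
  rw [← hbranch]
  refine hasOddBranchTerm_of_branchCoeff hh (fun k hk ↦ ?_) fun i hi ↦ ?_
  · refine Finset.sum_eq_zero fun a ha ↦ ?_
    have := Finset.mem_range.1 ha
    rw [tcoeff_pdy, hlow a _ (by omega), mul_zero, mul_zero]
  · refine Finset.sum_eq_zero fun a ha ↦ ?_
    have := Finset.mem_range.1 ha
    rw [hlow a _ (by omega), mul_zero]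

theorem hasOddBranchTerm_gullCore_add {h : ℝ × ℝ → ℝ} (hh : ContDiff ℝ ∞ h) {j : ℕ}
    (hlow : ∀ a b, a + b < 2 * j + 5 → tcoeff h a b = 0) :
    HasOddBranchTerm (gullCore + h) j (tcoeff h 0 (2 * j + 5)) := by
  simpa only [zero_add] using (hasOddBranchTerm_gullCore j).add
    (hasOddBranchTerm_of_tcoeff_eq_zero hh hlow) contDiff_gullCore hh

theorem tcoeff_snd_pow (m i j : ℕ) :
    tcoeff (fun p ↦ p.2 ^ m) i j = if i = 0 ∧ j = m then 1 else 0 := by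
  simpa only [pow_zero, one_mul] using tcoeff_monomial 1 0 m i j

theorem isGullType_gullCore_add_pow (j : ℕ) :
    IsGullType (gullCore + fun p ↦ p.2 ^ (2 * j + 5)) :=
  isGullType_gullCore_add (by fun_prop) fun a b hab ↦ by rw [tcoeff_snd_pow, if_neg (by omega)]

theorem hasOddBranchTerm_gullCore_add_pow (j : ℕ) :
    HasOddBranchTerm (gullCore + fun p ↦ p.2 ^ (2 * j + 5)) j 1 := by
  simpa [tcoeff_snd_pow] using
    hasOddBranchTerm_gullCore_add (h := fun p ↦ p.2 ^ (2 * j + 5)) (j := j) (by fun_prop)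
      fun a b hab ↦ by rw [tcoeff_snd_pow, if_neg (by omega)]

theorem exists_isGullNormalForm_gullCore_add (j : ℕ) {V : ℝ → ℝ} (hV : ContDiff ℝ ∞ V) :
    ∃ e : ℝ × ℝ → ℝ, ContDiff ℝ ∞ e ∧ VanishesToOrder (2 * j + 6) e ∧
      IsGullNormalForm (gullCore + e) fun s ↦ s ^ (j + 1) * V s := by
  set m := 2 * j + 5
  -- Chosen so that `∂e/∂y = y * (x + 2 * y ^ 2) * y ^ (m - 2) * k x`.
  set k : ℝ → ℝ := fun x ↦ m * (m + 2) / 4 * V (-x / 2)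
  have hks : ContDiff ℝ ∞ k := by fun_prop
  have hm : (m : ℝ) ≠ 0 := by positivity
  set e : ℝ × ℝ → ℝ := fun p ↦ p.2 ^ m * ((p.1 / m + 2 * p.2 ^ 2 / (m + 2)) * k p.1)
  have hes : ContDiff ℝ ∞ e := by fun_prop
  refine ⟨e, hes, ?_, contDiff_gullCore.add hes, by fun_prop, ?_, ?_, ?_⟩
  · exact (VanishesToOrder.pow (h := Prod.snd) rfl contDiff_snd m).mul
      (vanishesToOrder_one.2 (by simp)) (by fun_prop) (by fun_prop)
  · exact .of_forall fun x ↦ by simp [gullCore, e, m]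
  · refine ⟨fun p ↦ 2 + p.2 ^ (m - 2) * k p.1, by fun_prop, by simp [m], .of_forall fun p ↦ ?_⟩
    refine pdy_eq_of_hasDerivAt ((contDiff_gullCore.add hes).differentiable (by simp) _) <|
      ((hasDerivAt_gullCore p.1 p.2).add ((hasDerivAt_pow m p.2).mul
        (((((hasDerivAt_pow 2 p.2).const_mul 2).div_const (m + 2 : ℝ)).const_add
          (p.1 / m)).mul_const (k p.1)))).congr_deriv ?_
    rw [show m - 1 = 2 * j + 4 by omega, show m - 2 = 2 * j + 3 by omega]
    field_simp
    simp only [m]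
    push_cast
    ring
  · refine .of_forall fun t ↦ ?_
    simp only [Pi.add_apply, gullCore, e, k, show -(-2 * t ^ 2) / 2 = t ^ 2 by ring]
    field_simp
    simp only [m]
    push_cast
    ring

end Core

section Classification

variable {g g' : ℝ × ℝ → ℝ} {j : ℕ} {I I' : ℝ}

theorem IsGullType.exists_isGullNormalForm_pow_mul (hg : IsGullType g)
    (hodd : HasOddBranchTerm g j I) :
    ∃ n U, ContDiff ℝ ∞ U ∧ (IsGullNormalForm n fun s ↦ s ^ j * U s) ∧
      AEquiv (prenormal g) (prenormal n) ∧ (I = 0 ↔ U 0 = 0) := by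
  suffices h : ∃ n U, ContDiff ℝ ∞ U ∧ (IsGullNormalForm n fun s ↦ s ^ j * U s) ∧
      AEquiv (prenormal g) (prenormal n) by
    obtain ⟨n, U, hU, hn, h⟩ := h
    exact ⟨n, U, hU, hn, h, hodd.eq_zero_iff_of_aequiv hg.contDiff hg.map_zero hn
      hU.continuous.continuousAt h⟩
  induction j generalizing I with
  | zero =>
    obtain ⟨n, w, hn, h⟩ := hg.exists_isGullNormalForm
    exact ⟨n, w, hn.contDiff_odd, by simpa using hn, h⟩
  | succ j ih =>
    have hodd' := hodd.of_lt j.lt_succ_self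
    obtain ⟨n, U, hU, hn, h⟩ := ih hodd'
    have hU₀ : U 0 = 0 := (hodd'.eq_zero_iff_of_aequiv hg.contDiff hg.map_zero hn
      hU.continuous.continuousAt h).1 rfl
    obtain ⟨H, hHs, hH, -⟩ := exists_hadamard (h := fun p : ℝ × ℝ ↦ U p.2) (by fun_prop)
    refine ⟨n, fun s ↦ H (0, s), by fun_prop, ?_, h⟩
    convert hn using 2 with s
    simp only [hH 0 s, hU₀, smul_eq_mul]
    ring

theorem IsGullType.eq_zero_iff_of_aequiv (hg : IsGullType g) (hg' : IsGullType g')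
    (hodd : HasOddBranchTerm g j I) (hodd' : HasOddBranchTerm g' j I')
    (h : AEquiv (prenormal g) (prenormal g')) : I = 0 ↔ I' = 0 := by
  obtain ⟨n, U, hU, hn, hn', hI'⟩ := hg'.exists_isGullNormalForm_pow_mul hodd'
  exact (hodd.eq_zero_iff_of_aequiv hg.contDiff hg.map_zero hn hU.continuous.continuousAt
    (h.trans hn')).trans hI'.symm

theorem IsGullType.aequiv_iff (hg : IsGullType g) (hg' : IsGullType g')
    (hodd : HasOddBranchTerm g j I) (hodd' : HasOddBranchTerm g' j I') (hI' : I' ≠ 0) :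
    AEquiv (prenormal g) (prenormal g') ↔ I ≠ 0 := by
  refine ⟨fun h ↦ mt (hg.eq_zero_iff_of_aequiv hg' hodd hodd' h).1 hI', fun hI ↦ ?_⟩
  obtain ⟨n, U, hU, hn, h, hU₀⟩ := hg.exists_isGullNormalForm_pow_mul hodd
  obtain ⟨n', U', hU', hn', h', hU'₀⟩ := hg'.exists_isGullNormalForm_pow_mul hodd'
  have hnn' := AEquiv.of_isGullNormalForm_pow_mul hn hn' hU hU' (mt hU₀.2 hI) (mt hU'₀.2 hI')
  exact (h.trans hnn').trans
    (h'.symm (contDiff_prenormal hg'.contDiff) (by simp [prenormal, hg'.map_zero]))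

theorem IsGullType.aequiv_gullCore_add_pow_iff (hg : IsGullType g) (hodd : HasOddBranchTerm g j I) :
    AEquiv (prenormal g) (prenormal (gullCore + fun p ↦ p.2 ^ (2 * j + 5))) ↔ I ≠ 0 :=
  hg.aequiv_iff (isGullType_gullCore_add_pow j) hodd (hasOddBranchTerm_gullCore_add_pow j)
    one_ne_zero

theorem IsGullType.eq_zero_of_aequiv_gullCore_add_pow {i : ℕ} (hg : IsGullType g)
    (hodd : HasOddBranchTerm g i I) (hij : i < j)
    (h : AEquiv (prenormal g) (prenormal (gullCore + fun p ↦ p.2 ^ (2 * j + 5)))) : I = 0 :=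
  (hg.eq_zero_iff_of_aequiv (isGullType_gullCore_add_pow j) hodd
    ((hasOddBranchTerm_gullCore_add_pow j).of_lt hij) h).2 rfl

theorem IsGullType.jetEquiv_gullCore_iff (hg : IsGullType g) (hodd : HasOddBranchTerm g j I) :
    JetEquiv (2 * j + 5) (prenormal g) (prenormal gullCore) ↔ I = 0 := by
  rw [jetEquiv_prenormal_iff (by omega) (contDiff_prenormal hg.contDiff) contDiff_gullCore]
  constructor
  · rintro ⟨e, hes, he, h⟩
    have hlow (a b : ℕ) (hab : a + b < 2 * j + 6) : tcoeff e a b = 0 := he.tcoeff_eq_zero hes hab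
    rw [hg.eq_zero_iff_of_aequiv (isGullType_gullCore_add hes fun a b hab ↦ hlow a b (by omega))
      hodd (hasOddBranchTerm_gullCore_add hes fun a b hab ↦ hlow a b (by omega)) h]
    exact hlow 0 (2 * j + 5) (by omega)
  · intro hI
    obtain ⟨n, U, hU, hn, h, hU₀⟩ := hg.exists_isGullNormalForm_pow_mul hodd
    obtain ⟨H, hHs, hH, -⟩ := exists_hadamard (h := fun p : ℝ × ℝ ↦ U p.2) (by fun_prop)
    obtain ⟨e, hes, he, hn'⟩ :=
      exists_isGullNormalForm_gullCore_add j (V := fun s ↦ H (0, s)) (by fun_prop)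
    refine ⟨e, hes, he, h.trans (.of_isGullNormalForm hn hn' (.of_forall fun s ↦ ?_))⟩
    simp only [hH 0 s, hU₀.1 hI, smul_eq_mul]
    ring

end Classification

section Coefficients

variable {g : ℝ × ℝ → ℝ}

theorem hasOddBranchTerm_zero (hg : ContDiff ℝ ∞ g)
    (hlow : ∀ i j, i + j < 5 → tcoeff g i j = P11 i j) :
    HasOddBranchTerm g 0 (tcoeff g 0 5) := by
  convert hasOddBranchTerm_of_branchCoeff hg (j := 0) (fun k hk ↦ ?_) fun i hi ↦ ?_ using 1
  · simp [branchCoeff, Finset.sum_range_succ, hlow, P11]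
  · interval_cases k <;> norm_num [branchCoeff, tcoeff_pdy, Finset.sum_range_succ, hlow, P11]
  · interval_cases i <;> norm_num [branchCoeff, Finset.sum_range_succ, hlow, P11]

theorem hasOddBranchTerm_one (hg : ContDiff ℝ ∞ g)
    (hlow : ∀ i j, i + j < 5 → tcoeff g i j = P11 i j) (h₀₅ : tcoeff g 0 5 = 0) :
    HasOddBranchTerm g 1 (tcoeff g 0 7 - 2 * tcoeff g 1 5 + 4 * tcoeff g 2 3) := by
  convert hasOddBranchTerm_of_branchCoeff hg (j := 1) (fun k hk ↦ ?_) fun i hi ↦ ?_ using 1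
  · norm_num [branchCoeff, Finset.sum_range_succ, hlow, P11]
    ring
  · interval_cases k <;>
      norm_num [branchCoeff, tcoeff_pdy, Finset.sum_range_succ, hlow, P11, h₀₅]
  · interval_cases i <;> norm_num [branchCoeff, Finset.sum_range_succ, hlow, P11, h₀₅]

theorem hasOddBranchTerm_two (hg : ContDiff ℝ ∞ g)
    (hlow : ∀ i j, i + j < 8 → tcoeff g i j = P11 i j) :
    HasOddBranchTerm g 2 (tcoeff g 0 9 - 2 * tcoeff g 1 7) := by
  convert hasOddBranchTerm_of_branchCoeff hg (j := 2) (fun k hk ↦ ?_) fun i hi ↦ ?_ using 1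
  · norm_num [branchCoeff, Finset.sum_range_succ, hlow, P11]
    ring
  · interval_cases k <;> norm_num [branchCoeff, tcoeff_pdy, Finset.sum_range_succ, hlow, P11]
  · interval_cases i <;> norm_num [branchCoeff, Finset.sum_range_succ, hlow, P11]

end Coefficients

theorem stmt11 (f : ℝ × ℝ → ℝ × ℝ) (g : ℝ × ℝ → ℝ) (hf0 : f 0 = 0)
    (hform : HasForm f g 5 P11) :
    (tcoeff g 0 5 ≠ 0 ↔
      AEquiv f (fun p => (p.1, p.1 * p.2 ^ 2 + p.2 ^ 4 + p.2 ^ 5))) ∧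
    ((tcoeff g 0 5 = 0 ∧ tcoeff g 0 7 - 2 * tcoeff g 1 5 + 4 * tcoeff g 2 3 ≠ 0) ↔
      AEquiv f (fun p => (p.1, p.1 * p.2 ^ 2 + p.2 ^ 4 + p.2 ^ 7))) ∧
    ((tcoeff g 0 5 = 0 ∧ tcoeff g 0 7 - 2 * tcoeff g 1 5 + 4 * tcoeff g 2 3 = 0) ↔
      JetEquiv 7 f (fun p => (p.1, p.1 * p.2 ^ 2 + p.2 ^ 4))) ∧
    ((∀ i j, i + j < 8 → tcoeff g i j = P11 i j) →
      (tcoeff g 0 9 - 2 * tcoeff g 1 7 ≠ 0 ↔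
        AEquiv f (fun p => (p.1, p.1 * p.2 ^ 2 + p.2 ^ 4 + p.2 ^ 9)))) := by
  obtain ⟨hg, hf, hlow⟩ := hform
  obtain rfl : f = prenormal g := funext hf
  have hgull : IsGullType g := isGullType_of_tcoeff hg hlow
  have h₀ := hasOddBranchTerm_zero hg hlow
  have h₁ := hasOddBranchTerm_one hg hlow
  refine ⟨(hgull.aequiv_gullCore_add_pow_iff h₀).symm, ⟨fun ⟨h₀₅, hI⟩ ↦ ?_, fun h ↦ ?_⟩,
    ⟨fun ⟨h₀₅, hI⟩ ↦ ?_, fun h ↦ ?_⟩, fun hlow' ↦ ?_⟩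
  · exact (hgull.aequiv_gullCore_add_pow_iff (h₁ h₀₅)).2 hI
  · have h₀₅ := hgull.eq_zero_of_aequiv_gullCore_add_pow (j := 1) h₀ one_pos h
    exact ⟨h₀₅, (hgull.aequiv_gullCore_add_pow_iff (h₁ h₀₅)).1 h⟩
  · exact (hgull.jetEquiv_gullCore_iff (h₁ h₀₅)).2 hI
  · have h₀₅ := (hgull.jetEquiv_gullCore_iff h₀).1 (h.mono (by norm_num))
    exact ⟨h₀₅, (hgull.jetEquiv_gullCore_iff (h₁ h₀₅)).1 h⟩
  · exact (hgull.aequiv_gullCore_add_pow_iff (hasOddBranchTerm_two hg hlow')).symm
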